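/- For every finite simple graph H with at least one edge there exists a constant C_H such that for all n, the deterministic query complexity of the forbidden-subgraph property Q_n^H is at least n(n-1)/2 − C_H. -/

import Mathlib

/-- A deterministic decision tree over a set of Boolean variables indexed by `ι`. -/
inductive DecisionTree (ι : Type) : Type
  | leaf : Bool → DecisionTree ι
  | node : ι → DecisionTree ι → DecisionTree ι → DecisionTree ι

namespace DecisionTree

/-- Evaluate a decision tree on an input assignment. -/
def eval {ι : Type} : DecisionTree ι → (ι → Bool) → Bool
  | leaf b, _ => b
  | node i t f, x => if x i then t.eval x else f.eval x

/-- The depth (worst-case number of queries) of a decision tree. -/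
def depth {ι : Type} : DecisionTree ι → ℕ
  | leaf _ => 0
  | node _ t f => max t.depth f.depth + 1

end DecisionTree

/-- The variables of a graph property on `n` vertices: pairs `i < j`. -/
def EdgeVar (n : ℕ) := {p : Fin n × Fin n // p.1 < p.2}

/-- The graph on `Fin n` determined by an assignment to the adjacency variables. -/
def graphOfInput {n : ℕ} (x : EdgeVar n → Bool) : SimpleGraph (Fin n) :=
  SimpleGraph.fromRel (fun i j => ∃ h : i < j, x ⟨(i, j), h⟩ = true)

/-- The deterministic query (decision-tree) complexity of a set of graphs on `Fin n`,
viewed as a Boolean function of the adjacency variables. -/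
noncomputable def queryComplexity {n : ℕ} (P : Set (SimpleGraph (Fin n))) : ℕ :=
  sInf {d | ∃ T : DecisionTree (EdgeVar n),
    (∀ x, T.eval x = true ↔ graphOfInput x ∈ P) ∧ T.depth ≤ d}

/-- A set of graphs on `Fin n` is evasive if its query complexity is `n(n-1)/2`,
the total number of adjacency variables. -/
def Evasive {n : ℕ} (P : Set (SimpleGraph (Fin n))) : Prop :=
  queryComplexity P = n * (n - 1) / 2

/-- `G` contains a (not necessarily induced) subgraph isomorphic to `H`. -/
def ContainsCopy {V : Type} (H : SimpleGraph V) {W : Type} (G : SimpleGraph W) : Prop :=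
  ∃ f : V → W, Function.Injective f ∧ ∀ v w : V, H.Adj v w → G.Adj (f v) (f w)

/-- The forbidden-subgraph property `Q_n^H`: graphs on `Fin n` containing no copy of `H`. -/
def ForbiddenSubgraphProperty {V : Type} (H : SimpleGraph V) (n : ℕ) :
    Set (SimpleGraph (Fin n)) :=
  {G | ¬ ContainsCopy H G}

/-- A prime `p` is an `ε`-near Fermat prime if `2^s ∣ p - 1` and `(p-1)/2^s ≤ p^ε`
for some `s ≥ 0`. -/
def NearFermatPrime (ε : ℝ) (p : ℕ) : Prop :=
  p.Prime ∧ ∃ s : ℕ, 2 ^ s ∣ p - 1 ∧ (((p - 1) / 2 ^ s : ℕ) : ℝ) ≤ (p : ℝ) ^ ε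

section Chains

variable {X : Type*}

/-- A chain vanishing outside the family `K`. -/
def SupportedOn (K : Set (Finset X)) (c : Finset X → ZMod 2) : Prop :=
  ∀ s, s ∉ K → c s = 0

lemma SupportedOn.add {K : Set (Finset X)} {c d : Finset X → ZMod 2} (hc : SupportedOn K c)
    (hd : SupportedOn K d) : SupportedOn K (c + d) := fun s hs => by
  simp [hc s hs, hd s hs]

variable [DecidableEq X]

/-- Adjoin the vertex `x` to every face of a chain. -/
def cone (x : X) : (Finset X → ZMod 2) →ₗ[ZMod 2] (Finset X → ZMod 2) where
  toFun c s := if x ∈ s then c (s.erase x) else 0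
  map_add' c d := by ext s; by_cases h : x ∈ s <;> simp [h]
  map_smul' r c := by ext s; by_cases h : x ∈ s <;> simp [h]

/-- Contract a chain with the vertex `x`. -/
def contract (x : X) : (Finset X → ZMod 2) →ₗ[ZMod 2] (Finset X → ZMod 2) where
  toFun c s := if x ∈ s then 0 else c (insert x s)
  map_add' c d := by ext s; by_cases h : x ∈ s <;> simp [h]
  map_smul' r c := by ext s; by_cases h : x ∈ s <;> simp [h]

/-- The part of a chain avoiding the vertex `x`. -/
def avoid (x : X) (c : Finset X → ZMod 2) : Finset X → ZMod 2 :=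
  fun s => if x ∈ s then 0 else c s

lemma cone_apply (x : X) (c : Finset X → ZMod 2) (s : Finset X) :
    cone x c s = if x ∈ s then c (s.erase x) else 0 := rfl

lemma contract_apply (x : X) (c : Finset X → ZMod 2) (s : Finset X) :
    contract x c s = if x ∈ s then 0 else c (insert x s) := rfl

lemma avoid_add_cone_contract (x : X) (c : Finset X → ZMod 2) :
    avoid x c + cone x (contract x c) = c := by
  ext s
  by_cases h : x ∈ s <;> simp [avoid, cone_apply, contract_apply, h]

variable [Fintype X]

/-- The boundary operator on mod 2 chains on the full simplex with vertex set `X`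
(augmented: the empty set is a face). -/
def boundary : (Finset X → ZMod 2) →ₗ[ZMod 2] (Finset X → ZMod 2) where
  toFun c s := ∑ y ∈ sᶜ, c (insert y s)
  map_add' c d := by ext s; simp [Finset.sum_add_distrib]
  map_smul' r c := by ext s; simp [Finset.mul_sum]

lemma boundary_apply (c : Finset X → ZMod 2) (s : Finset X) :
    boundary c s = ∑ y ∈ sᶜ, c (insert y s) := rfl

lemma boundary_cone (x : X) (c : Finset X → ZMod 2) :
    boundary (cone x c) = c + cone x (boundary c) := by
  ext s
  simp only [boundary_apply, cone_apply, Pi.add_apply]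
  by_cases h : x ∈ s
  · have h1 : (s.erase x)ᶜ = insert x sᶜ := by
      ext y; by_cases hy : y = x <;> simp [hy]
    rw [if_pos h, h1, Finset.sum_insert (by simpa using h), Finset.insert_erase h, ← add_assoc,
      CharTwo.add_self_eq_zero, zero_add]
    refine Finset.sum_congr rfl fun y hy => ?_
    have hyx : y ≠ x := by rintro rfl; simp [h] at hy
    rw [if_pos (by simp [h]), Finset.erase_insert_of_ne hyx]
  · rw [if_neg h, add_zero, Finset.sum_eq_single x]
    · simp [h]
    · intro y hy hyx
      simp [h, hyx.symm]
    · simp [h]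

lemma contract_boundary (x : X) (c : Finset X → ZMod 2) :
    contract x (boundary c) = boundary (contract x c) := by
  ext s
  simp only [boundary_apply, contract_apply]
  by_cases h : x ∈ s
  · simp [h]
  · rw [if_neg h]
    have h1 : sᶜ = insert x (insert x s)ᶜ := by
      ext y; by_cases hy : y = x <;> simp [hy, h]
    rw [h1, Finset.sum_insert (by simp)]
    simp only [Finset.mem_insert_self, if_true, zero_add]
    refine Finset.sum_congr rfl fun y hy => ?_
    have hyx : x ≠ y := by rintro rfl; simp at hy
    rw [if_neg (by simp [h, hyx]), Finset.insert_comm]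

lemma boundary_boundary (c : Finset X → ZMod 2) : boundary (boundary c) = 0 := by
  ext s
  simp only [boundary_apply, Pi.zero_apply]
  rw [Finset.sum_sigma']
  refine Finset.sum_involution (fun p _ => ⟨p.2, p.1⟩) ?_ ?_ ?_ ?_
  · rintro ⟨y, z⟩ h
    simp only [Finset.insert_comm z y]
    exact CharTwo.add_self_eq_zero _
  · rintro ⟨y, z⟩ h _ h'
    simp at h h'
    grind
  · rintro ⟨y, z⟩ h
    simp at h ⊢
    grind
  · rintro ⟨y, z⟩ h
    rfl

/-- The augmented mod 2 chain complex of `K` is exact. -/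
def Acyclic (K : Set (Finset X)) : Prop :=
  ∀ z, SupportedOn K z → boundary z = 0 → ∃ c, SupportedOn K c ∧ boundary c = z

lemma SupportedOn.boundary {K : Set (Finset X)} (hK : IsLowerSet K) {c : Finset X → ZMod 2}
    (hc : SupportedOn K c) : SupportedOn K (boundary c) := fun s hs => by
  refine Finset.sum_eq_zero fun y _ => hc _ fun h => hs (hK (Finset.subset_insert y s) h)

/-- A complex whose link and deletion at a vertex are acyclic is acyclic. -/
lemma acyclic_of_link_of_deletion {K : Set (Finset X)} (hK : IsLowerSet K) (x : X)
    (hlink : Acyclic {s | x ∉ s ∧ insert x s ∈ K}) (hdel : Acyclic {s | x ∉ s ∧ s ∈ K}) :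
    Acyclic K := by
  intro z hz hz0
  have hu : boundary (contract x z) = 0 := by rw [← contract_boundary, hz0, map_zero]
  obtain ⟨d, hd, hd'⟩ := hlink (contract x z) (fun s hs => by
    by_cases h : x ∈ s
    · simp [contract_apply, h]
    · simpa [contract_apply, h] using hz _ fun h' => hs ⟨h, h'⟩) hu
  have hz1 := avoid_add_cone_contract x z
  have hb : boundary (avoid x z + d) = 0 := by
    have h2 := congrArg boundary hz1
    rw [map_add, hz0, boundary_cone, hu, map_zero, add_zero] at h2
    rw [map_add, hd', h2]
  obtain ⟨e, he, he'⟩ := hdel (avoid x z + d) (fun s hs => by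
    by_cases h : x ∈ s
    · simp [avoid, h, hd s (fun h' => h'.1 h)]
    · have h' : s ∉ K := fun h' => hs ⟨h, h'⟩
      have : s ∉ {s | x ∉ s ∧ insert x s ∈ K} :=
        fun h'' => h' (hK (Finset.subset_insert x s) h''.2)
      simp [avoid, h, hz s h', hd s this]) hb
  refine ⟨e + cone x d, SupportedOn.add (fun s hs => he s fun h => hs h.2) (fun s hs => ?_), ?_⟩
  · by_cases h : x ∈ s
    · simpa [cone_apply, h] using hd _ fun h' => hs (by simpa [h] using h'.2)
    · simp [cone_apply, h]
  · rw [map_add, he', boundary_cone, hd']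
    have h3 : d + d = 0 := CharTwo.add_self_eq_zero d
    calc avoid x z + d + (d + cone x (contract x z))
        = (avoid x z + cone x (contract x z)) + (d + d) := by abel
      _ = z := by rw [hz1, h3, add_zero]

/-- A cone is acyclic. -/
lemma acyclic_of_cone {K : Set (Finset X)} (x : X)
    (hx : ∀ s ∈ K, insert x s ∈ K) : Acyclic K := by
  intro z hz hz0
  have hz1 := avoid_add_cone_contract x z
  have hu : boundary (contract x z) = 0 := by rw [← contract_boundary, hz0, map_zero]
  have h2 := congrArg boundary hz1
  rw [map_add, hz0, boundary_cone, hu, map_zero, add_zero] at h2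
  have h3 : boundary (avoid x z) = contract x z := CharTwo.add_eq_zero.1 h2
  refine ⟨cone x (avoid x z), fun s hs => ?_, ?_⟩
  · by_cases h : x ∈ s
    · have : s.erase x ∉ K := fun h' => hs (by simpa [h] using hx _ h')
      simp [cone_apply, h, avoid, hz _ this]
    · simp [cone_apply, h]
  · rw [boundary_cone, h3, hz1]

end Chains

section Subdivision

variable {X : Type*} [DecidableEq X]

lemma avoid_apply (x : X) (c : Finset X → ZMod 2) (s : Finset X) :
    avoid x c s = if x ∈ s then 0 else c s := rfl

/-- The family of faces obtained from `K` by subdividing the edge `ab` with a new vertex `m`. -/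
def subdivide (K : Set (Finset X)) (a b m : X) : Set (Finset X) :=
  {s | ¬ (a ∈ s ∧ b ∈ s) ∧ (if m ∈ s then insert a (insert b (s.erase m)) else s) ∈ K}

variable [Fintype X]

lemma acyclic_subdivide {K : Set (Finset X)} (hK : IsLowerSet K) {a b m : X} (hab : a ≠ b)
    (ha : a ≠ m) (hb : b ≠ m) (hm : ∀ s ∈ K, m ∉ s) (hac : Acyclic K) :
    Acyclic (subdivide K a b m) := by
  intro z hz hz0
  set u := contract m z with hu
  set zA := avoid m z with hzA
  set p := avoid a (avoid b u) with hp
  set q := contract a u with hq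
  set r := contract b u with hr
  have hz1 : zA + cone m u = z := avoid_add_cone_contract m z
  have hu0 : boundary u = 0 := by rw [hu, ← contract_boundary, hz0, map_zero]
  have hq0 : boundary q = 0 := by rw [hq, ← contract_boundary, hu0, map_zero]
  have hr0 : boundary r = 0 := by rw [hr, ← contract_boundary, hu0, map_zero]
  have huab : ∀ s, a ∈ s → b ∈ s → u s = 0 := by
    intro s h1 h2
    by_cases h3 : m ∈ s
    · simp [hu, contract_apply, h3]
    · simpa [hu, contract_apply, h3] using hz (insert m s) fun h => h.1 ⟨by simp [h1], by simp [h2]⟩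
  have hus : ∀ s, insert a (insert b s) ∉ K → u s = 0 := by
    intro s hs
    by_cases h3 : m ∈ s
    · simp [hu, contract_apply, h3]
    · simpa [hu, contract_apply, h3] using hz (insert m s) fun h => hs (by simpa [h3] using h.2)
  have hu1 : p + cone a q + cone b r = u := by
    ext s
    simp only [hp, hq, hr, avoid_apply, Pi.add_apply, cone_apply, contract_apply]
    by_cases h1 : a ∈ s <;> by_cases h2 : b ∈ s <;> simp [h1, h2, huab]
  have hpqr : boundary p = q + r := by
    have h := congrArg boundary hu1
    rw [map_add, map_add, hu0, boundary_cone, boundary_cone, hq0, hr0, map_zero, map_zero,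
      add_zero, add_zero, add_assoc] at h
    exact CharTwo.add_eq_zero.1 h
  have hzAu : boundary zA = u := by
    have h := congrArg boundary hz1
    rw [map_add, hz0, boundary_cone, hu0, map_zero, add_zero] at h
    exact CharTwo.add_eq_zero.1 h
  have hzAs : SupportedOn K zA := by
    intro s hs
    by_cases h : m ∈ s
    · simp [hzA, avoid_apply, h]
    · simpa [hzA, avoid_apply, h] using hz s fun h' => hs (by simpa [h] using h'.2)
  have hzAab : ∀ s, a ∈ s → b ∈ s → zA s = 0 := by
    intro s h1 h2
    by_cases h3 : m ∈ s
    · simp [hzA, avoid_apply, h3]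
    · simpa [hzA, avoid_apply, h3] using hz s fun h => h.1 ⟨h1, h2⟩
  obtain ⟨c, hc, hc'⟩ := hac (zA + cone a p + cone a (cone b r)) (by
    refine SupportedOn.add (SupportedOn.add hzAs ?_) ?_
    · intro s hs
      by_cases h : a ∈ s
      · by_cases h' : b ∈ s.erase a
        · simp [cone_apply, h, hp, avoid_apply, Finset.mem_of_mem_erase h', hab.symm]
        · have := hus (s.erase a) fun h'' => hs (hK (by intro y; simp; tauto) h'')
          simp [cone_apply, h, hp, avoid_apply, this]
      · simp [cone_apply, h]
    · intro s hs
      by_cases h : a ∈ s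
      · by_cases h' : b ∈ s
        · have h1 : insert b ((s.erase a).erase b) = s.erase a :=
            Finset.insert_erase (by simp [h', hab.symm])
          have := hus (s.erase a) fun h'' => hs (by
            rwa [Finset.insert_comm, Finset.insert_erase h, Finset.insert_eq_of_mem h'] at h'')
          simp [cone_apply, h, h', hab.symm, hr, contract_apply, h1, this]
        · simp [cone_apply, h, h']
      · simp [cone_apply, h]) (by
    rw [map_add, map_add, boundary_cone, boundary_cone, boundary_cone, hzAu, hr0, map_zero,
      add_zero, hpqr, ← hu1, map_add]
    have h1 := CharTwo.add_self_eq_zero p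
    have h2 := CharTwo.add_self_eq_zero (cone a q)
    have h3 := CharTwo.add_self_eq_zero (cone a r)
    have h4 := CharTwo.add_self_eq_zero (cone b r)
    linear_combination (exp := 1) h1 + h2 + h3 + h4)
  set d := contract a (contract b c) with hd
  have hd1 : boundary d = r := by
    rw [hd, ← contract_boundary, ← contract_boundary, hc']
    ext s
    simp only [contract_apply, Pi.add_apply, cone_apply]
    have hra : ∀ s, a ∈ s → r s = 0 := by
      intro s h
      by_cases h' : b ∈ s
      · simp [hr, contract_apply, h']
      · simpa [hr, contract_apply, h'] using huab _ (by simp [h]) (by simp)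
    by_cases h1 : a ∈ s
    · simp [h1, hra]
    · by_cases h2 : b ∈ s
      · simp [h1, h2, hr, contract_apply]
      · have h5 := hzAab (insert b (insert a s)) (by simp) (by simp)
        have h6 : p (insert b s) = 0 := by
          simp [hp, avoid_apply]
        simp [h1, h2, hab, hab.symm, h5, h6, Finset.erase_insert_of_ne]
  obtain ⟨cA, hcA⟩ : ∃ cA, cA = c + cone a (cone b d) := ⟨_, rfl⟩
  have hcd : cA + cone a (cone b d) = c := by
    rw [hcA, add_assoc, CharTwo.add_self_eq_zero, add_zero]
  have hcAab : ∀ s, a ∈ s → b ∈ s → cA s = 0 := by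
    intro s h1 h2
    have h3 : insert b (insert a ((s.erase a).erase b)) = s := by
      ext y; by_cases y = a <;> by_cases y = b <;> simp_all
    simp [hcA, cone_apply, h1, h2, hab.symm, hd, contract_apply, h3, CharTwo.add_self_eq_zero]
  have hcAs : SupportedOn K cA := by
    rw [hcA]
    refine SupportedOn.add hc ?_
    intro s hs
    by_cases h : a ∈ s
    · by_cases h' : b ∈ s
      · have h3 : insert b (insert a ((s.erase a).erase b)) = s := by
          ext y; by_cases y = a <;> by_cases y = b <;> simp_all
        simp [cone_apply, h, h', hab.symm, hd, contract_apply, h3, hc s hs]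
      · simp [cone_apply, h, h']
    · simp [cone_apply, h]
  have hds : ∀ s, insert a (insert b s) ∉ K → d s = 0 := by
    intro s hs
    simp only [hd, contract_apply]
    have := hc _ hs
    rw [Finset.insert_comm] at this
    simp [this]
  have hda : ∀ s, a ∈ s → d s = 0 := by
    intro s hs
    simp [hd, contract_apply, hs]
  have hdb : ∀ s, b ∈ s → d s = 0 := by
    intro s hs
    simp [hd, contract_apply, hs]
  have hmK : ∀ s, m ∈ s → s ∉ K := fun s h1 h2 => hm s h2 h1
  refine ⟨cA + cone m (cone a d) + cone m (cone b d) + cone m (cone a p),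
    SupportedOn.add (SupportedOn.add (SupportedOn.add ?_ ?_) ?_) ?_, ?_⟩
  · intro s hs
    by_cases h : m ∈ s
    · exact hcAs s (hmK s h)
    · by_cases h' : a ∈ s ∧ b ∈ s
      · exact hcAab s h'.1 h'.2
      · exact hcAs s fun h'' => hs ⟨h', by simpa [h] using h''⟩
  · intro s hs
    simp only [cone_apply]
    split_ifs with h1 h2 <;> try rfl
    by_cases h3 : b ∈ s
    · exact hdb _ (by simp [h3, hb, hab.symm])
    · refine hds _ fun h4 => hs ⟨fun h5 => h3 h5.2, ?_⟩
      rw [if_pos h1]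
      rw [Finset.insert_comm, Finset.insert_erase h2] at h4
      rwa [Finset.insert_eq_of_mem (Finset.mem_insert_of_mem h2)]
  · intro s hs
    simp only [cone_apply]
    split_ifs with h1 h2 <;> try rfl
    by_cases h3 : a ∈ s
    · exact hda _ (by simp [h3, ha, hab])
    · refine hds _ fun h4 => hs ⟨fun h5 => h3 h5.1, ?_⟩
      rw [if_pos h1]
      rw [Finset.insert_erase h2] at h4
      rwa [Finset.insert_eq_of_mem h2]
  · intro s hs
    simp only [cone_apply]
    split_ifs with h1 h2 <;> try rfl
    simp only [hp, avoid_apply]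
    split_ifs with h3 h4 <;> try rfl
    have h5 : b ∉ s := by simpa [hb, hab.symm] using h4
    refine hus _ fun h4 => hs ⟨fun h6 => h5 h6.2, ?_⟩
    rw [if_pos h1]
    rw [Finset.insert_comm, Finset.insert_erase h2] at h4
    rwa [Finset.insert_eq_of_mem (Finset.mem_insert_of_mem h2)]
  · have hbc : boundary cA + cone a d + cone b d = zA + cone a p := by
      have h := congrArg boundary hcd
      rw [hc', map_add, boundary_cone, boundary_cone, hd1, map_add (cone a)] at h
      linear_combination (exp := 1) h
    simp only [map_add, boundary_cone, hd1, hpqr]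
    rw [← hz1, ← hu1]
    simp only [map_add]
    have h1 := CharTwo.add_self_eq_zero (cone m d)
    have h2 := CharTwo.add_self_eq_zero (cone a p)
    have h3 := CharTwo.add_self_eq_zero (cone m (cone a r))
    linear_combination (exp := 1) hbc + h1 + h2 + h3

end Subdivision

section Maps

variable {X Y : Type*}

/-- Restrict a chain along an embedding of vertex sets. -/
def pullback (j : X ↪ Y) (c : Finset Y → ZMod 2) : Finset X → ZMod 2 := fun s => c (s.map j)

lemma pullback_apply (j : X ↪ Y) (c : Finset Y → ZMod 2) (s : Finset X) :
    pullback j c s = c (s.map j) := rfl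

lemma pullback_add (j : X ↪ Y) (c d : Finset Y → ZMod 2) :
    pullback j (c + d) = pullback j c + pullback j d := rfl

/-- A chain is determined by its restriction along `j` if its faces lie in the range of `j`. -/
lemma eq_of_pullback_eq (j : X ↪ Y) {c d : Finset Y → ZMod 2}
    (hc : SupportedOn {s | ∀ y ∈ s, y ∈ Set.range j} c)
    (hd : SupportedOn {s | ∀ y ∈ s, y ∈ Set.range j} d) (h : pullback j c = pullback j d) :
    c = d := by
  ext s
  by_cases hs : ∀ y ∈ s, y ∈ Set.range j
  · have : (s.preimage j j.injective.injOn).map j = s := by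
      ext y
      simp only [Finset.mem_map, Finset.mem_preimage]
      constructor
      · rintro ⟨x, hx, rfl⟩; exact hx
      · intro hy
        obtain ⟨x, rfl⟩ := hs y hy
        exact ⟨x, hy, rfl⟩
    have h1 := congrFun h (s.preimage j j.injective.injOn)
    rwa [pullback_apply, pullback_apply, this] at h1
  · rw [hc s hs, hd s hs]

lemma exists_pullback_eq (j : X ↪ Y) {K : Set (Finset Y)}
    {c : Finset X → ZMod 2} (hc : SupportedOn {s | s.map j ∈ K} c) :
    ∃ d, SupportedOn K d ∧ SupportedOn {s | ∀ y ∈ s, y ∈ Set.range j} d ∧ pullback j d = c := by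
  classical
  refine ⟨fun s => if s ∈ K ∧ ∀ y ∈ s, y ∈ Set.range j then
    c (s.preimage j j.injective.injOn) else 0, fun s hs => by simp [hs],
    fun s hs => if_neg fun h => hs h.2, ?_⟩
  ext s
  by_cases hs : s.map j ∈ K
  · have : (s.map j).preimage j j.injective.injOn = s := by ext; simp
    simp [pullback_apply, hs, this]
  · simp [pullback_apply, hs, hc s hs]

variable [Fintype X] [DecidableEq X] [Fintype Y] [DecidableEq Y]

lemma boundary_pullback (j : X ↪ Y) (c : Finset Y → ZMod 2)
    (hc : SupportedOn {s | ∀ y ∈ s, y ∈ Set.range j} c) :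
    boundary (pullback j c) = pullback j (boundary c) := by
  ext s
  simp only [boundary_apply, pullback, Finset.map_insert]
  refine (Finset.sum_map sᶜ j (fun y => c (insert y (s.map j)))).symm.trans
    (Finset.sum_subset ?_ ?_)
  · intro y hy
    simp only [Finset.mem_map, Finset.mem_compl] at hy ⊢
    grind [j.injective]
  · intro y hy hy'
    refine hc _ fun h => ?_
    obtain ⟨x, rfl⟩ := h y (Finset.mem_insert_self _ _)
    exact hy' (Finset.mem_map_of_mem j (by simpa using hy))

/-- Acyclicity does not depend on the ambient vertex set. -/
lemma acyclic_map_iff (j : X ↪ Y) {K : Set (Finset Y)} (hK : IsLowerSet K)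
    (hj : ∀ s ∈ K, ∀ y ∈ s, y ∈ Set.range j) :
    Acyclic {s : Finset X | s.map j ∈ K} ↔ Acyclic K := by
  have hsupp : ∀ {c : Finset Y → ZMod 2}, SupportedOn K c →
      SupportedOn {s | ∀ y ∈ s, y ∈ Set.range j} c := fun hc s hs =>
    hc s fun h => hs (hj s h)
  have h0 : SupportedOn {s | ∀ y ∈ s, y ∈ Set.range j} (0 : Finset Y → ZMod 2) := fun _ _ => rfl
  constructor
  · intro h z hz hz0
    obtain ⟨c, hc, hc'⟩ := h (pullback j z) (fun s hs => hz _ hs) (by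
      rw [boundary_pullback j z (hsupp hz), hz0]; rfl)
    obtain ⟨d, hd, hd', rfl⟩ := exists_pullback_eq j hc
    refine ⟨d, hd, eq_of_pullback_eq j (hsupp (hd.boundary hK)) (hsupp hz) ?_⟩
    rw [← boundary_pullback j d hd', hc']
  · intro h z hz hz0
    obtain ⟨d, hd, hd', rfl⟩ := exists_pullback_eq j hz
    rw [boundary_pullback j d hd'] at hz0
    obtain ⟨c, hc, hc'⟩ := h d hd (eq_of_pullback_eq j (hsupp (hd.boundary hK)) h0 hz0)
    refine ⟨pullback j c, fun s hs => hc _ hs, ?_⟩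
    rw [boundary_pullback j c (hsupp hc), hc']

end Maps

section Smith

variable {X : Type*} [Fintype X] [DecidableEq X]

lemma boundary_pullback_equiv (g : Equiv.Perm X) (c : Finset X → ZMod 2) :
    boundary (pullback g.toEmbedding c) = pullback g.toEmbedding (boundary c) :=
  boundary_pullback _ c fun s hs => absurd (fun y _ => ⟨g.symm y, by simp⟩) hs

/-- In an acyclic complex, cycles supported in dimension at least `i - 1` bound chains supported in
dimension at least `i`. -/
lemma Acyclic.exists_boundary_eq_of_card {K : Set (Finset X)} (h : Acyclic K) (i : ℕ)
    {z : Finset X → ZMod 2} (hz : SupportedOn K z) (hi : SupportedOn {s | i ≤ s.card} z)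
    (hz0 : boundary z = 0) :
    ∃ c, SupportedOn K c ∧ SupportedOn {s | i + 1 ≤ s.card} c ∧ boundary c = z := by
  obtain ⟨c, hc, hc'⟩ := h z hz hz0
  refine ⟨fun s => if i + 1 ≤ s.card then c s else 0, fun s hs => by simp [hc s hs],
    fun s hs => if_neg hs, ?_⟩
  ext s
  by_cases hs : i ≤ s.card
  · rw [← hc']
    refine Finset.sum_congr rfl fun y hy => if_pos ?_
    rw [Finset.card_insert_of_notMem (by simpa using hy)]
    omega
  · rw [hi s hs]
    refine Finset.sum_eq_zero fun y hy => if_neg ?_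
    rw [Finset.card_insert_of_notMem (by simpa using hy)]
    omega

/-- An invariant chain is the sum of a chain of fixed faces and a chain of orbit sums. -/
lemma exists_eq_add_pullback_add {K : Set (Finset X)} {t : Equiv.Perm X}
    (htt : ∀ x, t (t x) = x) {z : Finset X → ZMod 2} (hz : SupportedOn K z)
    (hinv : pullback t.toEmbedding z = z) :
    ∃ f d, SupportedOn {s | s ∈ K ∧ s.map t.toEmbedding = s} f ∧ SupportedOn K d ∧
      z = f + (d + pullback t.toEmbedding d) := by
  classical
  have hmm : ∀ s : Finset X, (s.map t.toEmbedding).map t.toEmbedding = s := by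
    intro s
    ext x
    have hsymm : ∀ x, t.symm x = t x := fun x => (Equiv.symm_apply_eq t).2 (htt x).symm
    simp [Finset.mem_map_equiv, hsymm]
  let φ := Fintype.equivFin (Finset X)
  refine ⟨fun s => if s.map t.toEmbedding = s then z s else 0,
    fun s => if φ s < φ (s.map t.toEmbedding) then z s else 0, fun s hs => ?_,
    fun s hs => by simp [hz s hs], ?_⟩
  · by_cases h : s ∈ K
    · exact if_neg fun h' => hs ⟨h, h'⟩
    · simp [hz s h]
  · ext s
    have h1 : z (s.map t.toEmbedding) = z s := congrFun hinv s
    simp only [Pi.add_apply, pullback_apply, hmm, h1]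
    by_cases h : s.map t.toEmbedding = s
    · simp [h]
    · have h2 : φ s ≠ φ (s.map t.toEmbedding) := fun h' => h (φ.injective h').symm
      rcases lt_or_gt_of_ne h2 with h3 | h3
      · simp [h, h3, h3.le]
      · simp [h, h3, h3.le]

/-- Smith's theorem for a regular involution of a mod 2 acyclic complex. -/
lemma Acyclic.fixed_of_regular {K : Set (Finset X)} (hK : IsLowerSet K) (h : Acyclic K)
    {t : Equiv.Perm X} (htt : ∀ x, t (t x) = x)
    (htK : ∀ s, s.map t.toEmbedding ∈ K ↔ s ∈ K)
    (hreg : ∀ s ∈ K, s.map t.toEmbedding = s → ∀ x ∈ s, t x = x) :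
    Acyclic {s | s ∈ K ∧ ∀ x ∈ s, t x = x} := by
  set F : Set (Finset X) := {s | s ∈ K ∧ ∀ x ∈ s, t x = x} with hF
  have hFF : {s | s ∈ K ∧ s.map t.toEmbedding = s} = F := by
    ext s
    refine and_congr_right fun hs => ⟨hreg s hs, fun h' => ?_⟩
    ext x
    simp only [Finset.mem_map_equiv]
    constructor
    · intro hx; have := h' _ hx; simp at this; rwa [← this] at hx
    · intro hx; rwa [(Equiv.symm_apply_eq t).2 (h' x hx).symm]
  have hFL : IsLowerSet F := fun s r hrs hs => ⟨hK hrs hs.1, fun x hx => hs.2 x (hrs hx)⟩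
  have hrho : ∀ (d : Finset X → ZMod 2) s, s ∈ F → (d + pullback t.toEmbedding d) s = 0 := by
    intro d s hs
    rw [← hFF] at hs
    simp [pullback_apply, hs.2, CharTwo.add_self_eq_zero]
  have hpp : ∀ c : Finset X → ZMod 2, pullback t.toEmbedding (pullback t.toEmbedding c) = c := by
    intro c
    ext s
    simp only [pullback_apply]
    congr 1
    ext x
    have hsymm : ∀ x, t.symm x = t x := fun x => (Equiv.symm_apply_eq t).2 (htt x).symm
    simp [Finset.mem_map_equiv, hsymm]
  have hps : ∀ {c : Finset X → ZMod 2}, SupportedOn K c →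
      SupportedOn K (pullback t.toEmbedding c) := fun hc s hs =>
    hc _ fun h' => hs ((htK s).1 h')
  have key : ∀ n i, Fintype.card X + 1 = n + i → ∀ z, SupportedOn K z →
      SupportedOn {s | i ≤ s.card} z → pullback t.toEmbedding z = z → boundary z = 0 →
      ∃ c, SupportedOn K c ∧ pullback t.toEmbedding c = c ∧ boundary c = z := by
    intro n
    induction n with
    | zero =>
      intro i hi z _ hzi _ _
      refine ⟨0, fun _ _ => rfl, rfl, ?_⟩
      rw [map_zero]
      ext s
      refine (hzi s fun h' => ?_).symm
      have := Finset.card_le_univ s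
      simp at h'
      omega
    | succ n ih =>
      intro i hi z hz hzi hinv hz0
      obtain ⟨c, hc, hci, rfl⟩ := h.exists_boundary_eq_of_card i hz hzi hz0
      obtain ⟨y, hy, hyt, hy'⟩ := ih (i + 1) (by omega) (c + pullback t.toEmbedding c)
        (hc.add (hps hc)) (hci.add fun s hs => hci _ (by simpa using hs))
        (by rw [pullback_add, hpp, add_comm]) (by
          rw [map_add, boundary_pullback_equiv, hinv, CharTwo.add_self_eq_zero])
      obtain ⟨f, d, hf, hd, rfl⟩ := exists_eq_add_pullback_add htt hy hyt
      rw [hFF] at hf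
      rw [map_add, map_add, boundary_pullback_equiv] at hy'
      have hf0 : boundary f = 0 := by
        ext s
        by_cases hs : s ∈ F
        · have h1 := congrFun hy' s
          rw [Pi.add_apply, hrho _ s hs, hrho _ s hs, add_zero] at h1
          exact h1
        · exact hf.boundary hFL s hs
      rw [hf0, zero_add] at hy'
      refine ⟨c + boundary d, hc.add (hd.boundary hK), ?_, ?_⟩
      · rw [pullback_add]
        refine CharTwo.add_eq_zero.1 ?_
        have h2 : (c + pullback t.toEmbedding c) + (c + pullback t.toEmbedding c) = 0 :=
          CharTwo.add_self_eq_zero _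
        linear_combination (exp := 1) hy' + h2
      · rw [map_add, boundary_boundary, add_zero]
  intro z hz hz0
  have hinv : pullback t.toEmbedding z = z := by
    ext s
    rw [pullback_apply]
    by_cases hs : s ∈ F
    · rw [← hFF] at hs
      rw [hs.2]
    · rw [hz s hs]
      refine hz _ fun h' => hs ?_
      rw [← hFF] at h' ⊢
      exact ⟨(htK s).1 h'.1, Finset.map_injective _ h'.2⟩
  obtain ⟨c, hc, hct, rfl⟩ := key _ 0 rfl z (fun s hs => hz s fun h' => hs h'.1)
    (fun s hs => absurd (Nat.zero_le _) hs) hinv hz0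
  obtain ⟨f, d, hf, hd, rfl⟩ := exists_eq_add_pullback_add htt hc hct
  rw [hFF] at hf
  refine ⟨f, hf, ?_⟩
  ext s
  by_cases hs : s ∈ F
  · rw [map_add, map_add, boundary_pullback_equiv, Pi.add_apply, hrho _ s hs, add_zero]
  · rw [hf.boundary hFL s hs, hz s hs]

end Smith

section Lefschetz

lemma trace_eq_zero_of_exact {M : Type*} [AddCommGroup M] [Module (ZMod 2) M]
    [FiniteDimensional (ZMod 2) M] (D g : M →ₗ[ZMod 2] M) (hD : D ∘ₗ D = 0)
    (hex : ∀ z, D z = 0 → ∃ c, D c = z) (hg : g ∘ₗ D = D ∘ₗ g) :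
    LinearMap.trace (ZMod 2) M g = 0 := by
  obtain ⟨σ, hσ⟩ := LinearMap.exists_rightInverse_of_surjective D.rangeRestrict
    (LinearMap.range_eq_top.2 D.surjective_rangeRestrict)
  have hσ' : ∀ y : LinearMap.range D, D (σ y) = y := fun y =>
    congrArg Subtype.val (LinearMap.congr_fun hσ y)
  have hDD : ∀ v, D (D v) = 0 := fun v => LinearMap.congr_fun hD v
  let e : M →ₗ[ZMod 2] LinearMap.range D :=
    LinearMap.codRestrict _ (LinearMap.id - σ ∘ₗ D.rangeRestrict) fun v => by
      obtain ⟨c, hc⟩ := hex (v - σ (D.rangeRestrict v)) (by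
        rw [map_sub, hσ']
        exact sub_self _)
      exact ⟨c, hc⟩
  obtain ⟨h, hid⟩ : ∃ h : M →ₗ[ZMod 2] M, D ∘ₗ h + h ∘ₗ D = LinearMap.id := by
    refine ⟨σ ∘ₗ e, ?_⟩
    ext v
    have h1 : D (σ (e v)) = v - σ (D.rangeRestrict v) := hσ' _
    have h2 : σ (e (D v)) = σ (D.rangeRestrict v) := by
      refine congrArg σ (Subtype.ext ?_)
      change D v - σ (D.rangeRestrict (D v)) = D v
      have : D.rangeRestrict (D v) = 0 := Subtype.ext (hDD v)
      rw [this, map_zero, sub_zero]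
    simp [h1, h2]
  calc LinearMap.trace (ZMod 2) M g
      = LinearMap.trace (ZMod 2) M (g ∘ₗ (D ∘ₗ h + h ∘ₗ D)) := by rw [hid, LinearMap.comp_id]
    _ = LinearMap.trace (ZMod 2) M (g ∘ₗ D ∘ₗ h) + LinearMap.trace (ZMod 2) M ((g ∘ₗ h) ∘ₗ D) := by
        rw [LinearMap.comp_add, map_add, LinearMap.comp_assoc]
    _ = LinearMap.trace (ZMod 2) M (g ∘ₗ D ∘ₗ h) + LinearMap.trace (ZMod 2) M (g ∘ₗ D ∘ₗ h) := by
        rw [LinearMap.trace_comp_comm' D (g ∘ₗ h), ← LinearMap.comp_assoc, hg,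
          LinearMap.comp_assoc]
    _ = 0 := CharTwo.add_self_eq_zero _

variable {X : Type*} [Fintype X] [DecidableEq X]

/-- The mod 2 Lefschetz fixed point theorem: an automorphism of an acyclic complex fixes an even
number of faces (counting the empty face). -/
lemma Acyclic.even_card_fixed {K : Set (Finset X)} (hK : IsLowerSet K) (h : Acyclic K)
    {g : Equiv.Perm X} (hgK : ∀ s, s.map g.toEmbedding ∈ K ↔ s ∈ K) :
    Even (Nat.card {s // s ∈ K ∧ s.map g.toEmbedding = s}) := by
  classical
  let M : Submodule (ZMod 2) (Finset X → ZMod 2) :=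
    { carrier := {c | SupportedOn K c}
      add_mem' := fun ha hb => SupportedOn.add ha hb
      zero_mem' := fun _ _ => rfl
      smul_mem' := fun r c hc s hs => by simp [hc s hs] }
  let G : (Finset X → ZMod 2) →ₗ[ZMod 2] (Finset X → ZMod 2) :=
    { toFun := pullback g.toEmbedding
      map_add' := fun _ _ => rfl
      map_smul' := fun _ _ => rfl }
  have hGM : ∀ c ∈ M, G c ∈ M := fun c hc s hs => hc _ fun h' => hs ((hgK s).1 h')
  have hBM : ∀ c ∈ M, boundary c ∈ M := fun c hc => SupportedOn.boundary hK hc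
  have h0 : LinearMap.trace (ZMod 2) M (G.restrict hGM) = 0 := by
    refine trace_eq_zero_of_exact (boundary.restrict hBM) _ ?_ ?_ ?_
    · ext1 c
      exact Subtype.ext (boundary_boundary c.1)
    · rintro ⟨z, hz⟩ hz0
      obtain ⟨c, hc, hc'⟩ := h z hz (congrArg Subtype.val hz0)
      exact ⟨⟨c, hc⟩, Subtype.ext hc'⟩
    · ext1 c
      exact Subtype.ext (boundary_pullback_equiv g c.1).symm
  let E : (Finset X → ZMod 2) →ₗ[ZMod 2] M :=
    { toFun := fun c => ⟨fun s => if s ∈ K then c s else 0, fun s hs => if_neg hs⟩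
      map_add' := fun c d => Subtype.ext <| by
        ext s; by_cases hs : s ∈ K <;> simp [hs]
      map_smul' := fun r c => Subtype.ext <| by
        ext s; by_cases hs : s ∈ K <;> simp [hs] }
  have hE : E ∘ₗ M.subtype = LinearMap.id := by
    ext1 c
    refine Subtype.ext ?_
    ext s
    by_cases hs : s ∈ K
    · simp [E, hs]
    · simp [E, hs, c.2 s hs]
  have h1 : LinearMap.trace (ZMod 2) _ (G ∘ₗ M.subtype ∘ₗ E) = 0 := by
    rw [← h0, ← LinearMap.comp_assoc, LinearMap.trace_comp_comm']
    congr 1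
    ext1 c
    exact LinearMap.congr_fun hE (G.restrict hGM c)
  rw [LinearMap.trace_eq_matrix_trace _ (Pi.basisFun (ZMod 2) (Finset X)), Matrix.trace] at h1
  have h2 : ∀ s, Matrix.diag ((LinearMap.toMatrix (Pi.basisFun (ZMod 2) (Finset X))
      (Pi.basisFun (ZMod 2) (Finset X))) (G ∘ₗ M.subtype ∘ₗ E)) s =
      if s ∈ K ∧ s.map g.toEmbedding = s then 1 else 0 := by
    intro s
    rw [Matrix.diag_apply, LinearMap.toMatrix_apply]
    simp only [Pi.basisFun_apply, Pi.basisFun_repr, LinearMap.comp_apply]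
    change (if s.map g.toEmbedding ∈ K then (Pi.single s 1 : Finset X → ZMod 2)
      (s.map g.toEmbedding) else 0) = _
    rw [hgK]
    by_cases h3 : s.map g.toEmbedding = s <;> simp [h3]
  rw [Finset.sum_congr rfl fun s _ => h2 s, Finset.sum_boole] at h1
  rw [Nat.card_eq_fintype_card, Fintype.card_subtype]
  exact (ZMod.natCast_eq_zero_iff_even).1 h1

end Lefschetz

section SmithQuotient

variable {X Y : Type*} [Fintype X] [DecidableEq X] [DecidableEq Y]

/-- The vertices of `X` covered by a set of vertices of `X` and fibres of `π : X → Y`. -/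
def expand (π : X → Y) (s : Finset (X ⊕ Y)) : Finset X :=
  {x | Sum.inl x ∈ s ∨ Sum.inr (π x) ∈ s}

lemma mem_expand {π : X → Y} {s : Finset (X ⊕ Y)} {x : X} :
    x ∈ expand π s ↔ Sum.inl x ∈ s ∨ Sum.inr (π x) ∈ s := by simp [expand]

/-- The complex obtained from `K` by subdividing the edges which are the fibres of `π` over `R`. -/
def subdivideFibers (K : Set (Finset X)) (t : X → X) (π : X → Y) (R : Finset Y) :
    Set (Finset (X ⊕ Y)) :=
  {s | (∀ x, π x ∈ R → ¬ (Sum.inl x ∈ s ∧ Sum.inl (t x) ∈ s)) ∧ (∀ y, Sum.inr y ∈ s → y ∈ R) ∧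
    expand π s ∈ K}

lemma isLowerSet_subdivideFibers {K : Set (Finset X)} (hK : IsLowerSet K) (t : X → X) (π : X → Y)
    (R : Finset Y) : IsLowerSet (subdivideFibers K t π R) := by
  rintro s r hrs ⟨h1, h2, h3⟩
  refine ⟨fun x hx h => h1 x hx ⟨hrs h.1, hrs h.2⟩, fun y hy => h2 y (hrs hy), hK ?_ h3⟩
  intro x hx
  rw [mem_expand] at hx ⊢
  exact hx.imp (@hrs _) (@hrs _)

lemma subdivideFibers_insert (K : Set (Finset X)) {t : X → X} (htt : ∀ x, t (t x) = x)
    {π : X → Y} (hπ : ∀ x x', π x = π x' ↔ x' = x ∨ x' = t x) {R : Finset Y} {x₀ : X}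
    (hR : π x₀ ∉ R) :
    subdivideFibers K t π (insert (π x₀) R) =
      subdivide (subdivideFibers K t π R) (Sum.inl x₀) (Sum.inl (t x₀)) (Sum.inr (π x₀)) := by
  have ht0 : π (t x₀) = π x₀ := ((hπ _ _).2 (Or.inr rfl)).symm
  ext s
  set s' := if Sum.inr (π x₀) ∈ s then
    insert (Sum.inl x₀) (insert (Sum.inl (t x₀)) (s.erase (Sum.inr (π x₀)))) else s with hs'
  have hexp : expand π s' = expand π s := by
    ext x
    have := hπ x₀ x
    simp only [mem_expand, hs']
    split_ifs <;> grind
  have hl : ∀ x, π x ∈ R → (Sum.inl x ∈ s' ↔ Sum.inl x ∈ s) := by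
    intro x hx
    simp only [hs']
    split_ifs
    · simp only [Finset.mem_insert, Finset.mem_erase, Sum.inl.injEq]
      grind
    · rfl
  have hr : ∀ y, Sum.inr y ∈ s' ↔ Sum.inr y ∈ s ∧ y ≠ π x₀ := by
    intro y
    simp only [hs']
    split_ifs
    · simp; tauto
    · grind
  have htR : ∀ x, π (t x) = π x := fun x => ((hπ _ _).2 (Or.inr rfl)).symm
  change (_ ∧ _ ∧ _) ↔ (_ ∧ _ ∧ _ ∧ expand π s' ∈ K)
  rw [hexp]
  constructor
  · rintro ⟨h1, h2, h3⟩
    refine ⟨h1 x₀ (Finset.mem_insert_self _ _), fun x hx h => ?_, fun y hy => ?_, h3⟩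
    · rw [hl x hx, hl (t x) (by rwa [htR])] at h
      exact h1 x (Finset.mem_insert_of_mem hx) h
    · rw [hr] at hy
      exact (Finset.mem_insert.1 (h2 y hy.1)).resolve_left hy.2
  · rintro ⟨h0, h1, h2, h3⟩
    refine ⟨fun x hx h => ?_, fun y hy => ?_, h3⟩
    · rcases Finset.mem_insert.1 hx with hx | hx
      · rcases (hπ x x₀).1 hx with rfl | rfl
        · exact h0 h
        · rw [htt] at h0; exact h0 h.symm
      · exact h1 x hx ⟨(hl x hx).2 h.1, (hl (t x) (by rwa [htR])).2 h.2⟩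
    · by_cases hy' : y = π x₀
      · exact hy' ▸ Finset.mem_insert_self _ _
      · exact Finset.mem_insert_of_mem (h2 y ((hr y).2 ⟨hy, hy'⟩))

variable [Fintype Y]

lemma acyclic_subdivideFibers {K : Set (Finset X)} (hK : IsLowerSet K) (hac : Acyclic K)
    {t : X → X} (htt : ∀ x, t (t x) = x) {π : X → Y} (hsurj : Function.Surjective π)
    (hπ : ∀ x x', π x = π x' ↔ x' = x ∨ x' = t x) (R : Finset Y)
    (hR : ∀ x, π x ∈ R → t x ≠ x) : Acyclic (subdivideFibers K t π R) := by
  induction R using Finset.induction_on with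
  | empty =>
    refine (acyclic_map_iff (Function.Embedding.inl : X ↪ X ⊕ Y)
      (isLowerSet_subdivideFibers hK t π _) ?_).1 ?_
    · rintro s ⟨-, h2, -⟩ (x | y) hy
      · exact ⟨x, rfl⟩
      · exact absurd (h2 y hy) (Finset.notMem_empty _)
    · convert hac using 1
      ext s
      have : expand π (s.map Function.Embedding.inl) = s := by ext x; simp [mem_expand]
      simp [subdivideFibers, this]
  | insert y R hy ih =>
    obtain ⟨x₀, rfl⟩ := hsurj y
    rw [subdivideFibers_insert K htt hπ hy]
    exact acyclic_subdivide (isLowerSet_subdivideFibers hK t π R)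
      (fun h => hR x₀ (Finset.mem_insert_self _ _) (Sum.inl.inj h).symm) Sum.inl_ne_inr
      Sum.inl_ne_inr (fun s hs h => hy (hs.2.1 _ h))
      (ih fun x hx => hR x (Finset.mem_insert_of_mem hx))

/-- Smith's theorem: if an involution acts on a mod 2 acyclic complex, then the complex of
invariant faces, with the orbits as vertices, is acyclic. -/
theorem Acyclic.of_involution {K : Set (Finset X)} (hK : IsLowerSet K) (hac : Acyclic K)
    {t : Equiv.Perm X} (htt : ∀ x, t (t x) = x)
    (htK : ∀ s, s.map t.toEmbedding ∈ K ↔ s ∈ K) {π : X → Y} (hsurj : Function.Surjective π)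
    (hπ : ∀ x x', π x = π x' ↔ x' = x ∨ x' = t x) :
    Acyclic {s : Finset Y | ({x | π x ∈ s} : Finset X) ∈ K} := by
  classical
  let R : Finset Y := {y | ∀ x, π x = y → t x ≠ x}
  have hR : ∀ x, π x ∈ R ↔ t x ≠ x := by
    intro x
    simp only [R, Finset.mem_filter_univ]
    refine ⟨fun h => h x rfl, fun h x' hx' => ?_⟩
    rcases (hπ _ _).1 hx' with rfl | rfl
    · exact h
    · rw [htt] at h; exact h.symm
  have hsymm : ∀ x, t.symm x = t x := fun x => (Equiv.symm_apply_eq t).2 (htt x).symm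
  have hπt : ∀ x, π (t x) = π x := fun x => ((hπ _ _).2 (Or.inr rfl)).symm
  have hLR := isLowerSet_subdivideFibers hK t π R
  have h1 := acyclic_subdivideFibers hK hac htt hsurj hπ R fun x => (hR x).1
  let τ : Equiv.Perm (X ⊕ Y) := Equiv.sumCongr t (Equiv.refl Y)
  have hl : ∀ (s : Finset (X ⊕ Y)) x, Sum.inl x ∈ s.map τ.toEmbedding ↔ Sum.inl (t x) ∈ s := by
    intro s x; simp [Finset.mem_map_equiv, τ, hsymm]
  have hr : ∀ (s : Finset (X ⊕ Y)) y, Sum.inr y ∈ s.map τ.toEmbedding ↔ Sum.inr y ∈ s := by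
    intro s y; simp [Finset.mem_map_equiv, τ]
  have hexp : ∀ s : Finset (X ⊕ Y), expand π (s.map τ.toEmbedding) = (expand π s).map t.toEmbedding := by
    intro s
    ext x
    rw [mem_expand, hl, hr, Finset.mem_map_equiv, hsymm, mem_expand, hπt]
  have h2 := h1.fixed_of_regular hLR (t := τ) (by rintro (x | y) <;> simp [τ, htt])
    (fun s => by
      change (_ ∧ _ ∧ _) ↔ (_ ∧ _ ∧ _)
      simp only [hexp, htK, hl, hr, htt]
      refine and_congr_left fun _ => forall_congr' fun x => imp_congr_right fun _ => ?_
      tauto)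
    (fun s hs hss => by
      rintro (x | y) hx
      · have h3 : Sum.inl (t x) ∈ s := by rwa [← hss, hl, htt]
        have := mt (hR x).2 fun h => hs.1 x h ⟨hx, h3⟩
        simp only [ne_eq, not_not] at this
        simp [τ, this]
      · rfl)
  let j₀ : Y → X ⊕ Y := fun y => if y ∈ R then Sum.inr y else Sum.inl (Function.surjInv hsurj y)
  have hj₀ : Function.Injective j₀ := by
    intro y y' h
    simp only [j₀] at h
    split_ifs at h
    · exact Sum.inr.inj h
    · exact Function.injective_surjInv hsurj (Sum.inl.inj h)
  have hinl : ∀ x, π x ∉ R → j₀ (π x) = Sum.inl x := by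
    intro x hx
    simp only [j₀, if_neg hx, Sum.inl.injEq]
    have h3 := Function.surjInv_eq hsurj (π x)
    have h4 : t x = x := by simpa using mt (hR x).2 hx
    rcases (hπ _ _).1 h3.symm with h | h
    · exact h
    · rw [h, h4]
  have hinr : ∀ y ∈ R, j₀ y = Sum.inr y := fun y hy => if_pos hy
  let j : Y ↪ X ⊕ Y := ⟨j₀, hj₀⟩
  have hFL : IsLowerSet {s | s ∈ subdivideFibers K t π R ∧ ∀ x ∈ s, τ x = x} :=
    fun s r hrs hs => ⟨hLR hrs hs.1, fun x hx => hs.2 x (hrs hx)⟩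
  have h3 := (acyclic_map_iff j hFL
    (by
      rintro s ⟨hs, hs'⟩ (x | y) hx
      · have h4 : t x = x := by simpa [τ] using hs' _ hx
        exact ⟨π x, hinl x fun h => (hR x).1 h h4⟩
      · exact ⟨y, hinr y (hs.2.1 y hx)⟩)).2 h2
  convert h3 using 1
  ext s
  have hmr : ∀ y, Sum.inr y ∈ s.map j ↔ y ∈ s ∧ y ∈ R := by
    intro y
    simp only [Finset.mem_map]
    constructor
    · rintro ⟨y', hy', h⟩
      by_cases hyR : y' ∈ R
      · cases (hinr y' hyR).symm.trans h; exact ⟨hy', hyR⟩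
      · exact absurd h (by simp [j, j₀, hyR])
    · rintro ⟨h, h'⟩
      exact ⟨y, h, hinr y h'⟩
  have hml : ∀ x, Sum.inl x ∈ s.map j ↔ π x ∈ s ∧ π x ∉ R := by
    intro x
    simp only [Finset.mem_map]
    constructor
    · rintro ⟨y', hy', h⟩
      obtain ⟨x', rfl⟩ := hsurj y'
      by_cases hyR : π x' ∈ R
      · exact absurd h (by simp [j, j₀, hyR])
      · cases (hinl x' hyR).symm.trans h; exact ⟨hy', hyR⟩
    · rintro ⟨h, h'⟩
      exact ⟨π x, h, hinl x h'⟩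
  have hexp' : expand π (s.map j) = ({x | π x ∈ s} : Finset X) := by
    ext x
    rw [mem_expand, hml, hmr, or_comm, ← and_or_left, and_iff_left (em _)]
    simp
  change _ ↔ (_ ∧ _ ∧ _) ∧ _
  rw [hexp']
  refine ⟨fun h => ⟨⟨fun x hx h' => ((hml x).1 h'.1).2 hx, fun y hy => ((hmr y).1 hy).2, h⟩, ?_⟩,
    fun h => h.1.2.2⟩
  rintro (x | y) hx
  · have h4 : t x = x := by simpa using mt (hR x).2 ((hml x).1 hx).2
    simp [τ, h4]
  · rfl

end SmithQuotient

section TwoGroup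

/-- Smith's theorem for 2-groups: if a 2-group acts on a mod 2 acyclic complex, then the complex of
invariant faces, with the orbits as vertices, is acyclic. -/
theorem Acyclic.of_two_group (k : ℕ) : ∀ {G X Y : Type} [Group G] [MulAction G X] [Fintype X]
    [DecidableEq X] [Fintype Y] [DecidableEq Y] (_ : Nat.card G = 2 ^ k) {K : Set (Finset X)}
    (_ : IsLowerSet K) (_ : Acyclic K)
    (_ : ∀ (g : G) s, s ∈ K → s.map (MulAction.toPerm g).toEmbedding ∈ K) {π : X → Y}
    (_ : Function.Surjective π) (_ : ∀ x x', π x = π x' ↔ ∃ g : G, g • x = x'),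
    Acyclic {s : Finset Y | ({x | π x ∈ s} : Finset X) ∈ K} := by
  induction k with
  | zero =>
    intro G X Y _ _ _ _ _ _ hG K hK hac hinv π hsurj hπ
    have : Subsingleton G := (Nat.card_eq_one_iff_unique.1 (by simpa using hG)).1
    refine Acyclic.of_involution (t := 1) hK hac (fun _ => rfl) (fun s => ?_) hsurj ?_
    · rw [Equiv.Perm.one_def, Equiv.refl_toEmbedding, Finset.map_refl]
    · intro x x'
      rw [hπ]
      constructor
      · rintro ⟨g, rfl⟩
        left
        rw [Subsingleton.elim g 1, one_smul]
      · rintro (h | h)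
        · exact ⟨1, by rw [one_smul, h]⟩
        · exact ⟨1, by rw [one_smul, h]; rfl⟩
  | succ k ih =>
    intro G X Y _ _ _ _ _ _ hG K hK hac hinv π hsurj hπ
    classical
    have : Finite G := Nat.finite_of_card_ne_zero (by rw [hG]; positivity)
    obtain ⟨N, hN⟩ := Sylow.exists_subgroup_card_pow_prime (G := G) 2 (n := k)
      (by rw [hG]; exact pow_dvd_pow 2 (Nat.le_succ k))
    have hidx : N.index = 2 := by
      have := N.card_mul_index
      rw [hG, hN, pow_succ] at this
      exact Nat.eq_of_mul_eq_mul_left (by positivity) this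
    have hnorm := Subgroup.normal_of_index_eq_two hidx
    obtain ⟨g, hg⟩ : ∃ g, g ∉ N := by
      by_contra! h
      rw [(Subgroup.eq_top_iff' N).2 h, Subgroup.index_top] at hidx
      omega
    let q : X → MulAction.orbitRel.Quotient N X := Quotient.mk _
    have hq : ∀ x x', q x = q x' ↔ ∃ n : N, n • x = x' := by
      intro x x'
      rw [eq_comm]
      exact Quotient.eq.trans MulAction.orbitRel_apply
    have hqs : Function.Surjective q := Quotient.mk_surjective
    have h1 := ih hN hK hac (fun n s hs => hinv n s hs) hqs hq
    have hwd : ∀ x x', q x = q x' → q (g • x) = q (g • x') := by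
      intro x x' h
      obtain ⟨n, rfl⟩ := (hq _ _).1 h
      refine (hq _ _).2 ⟨⟨g * n * g⁻¹, hnorm.conj_mem n n.2 g⟩, ?_⟩
      rw [Subgroup.mk_smul, Subgroup.smul_def]
      simp [mul_smul]
    let t₀ : MulAction.orbitRel.Quotient N X → MulAction.orbitRel.Quotient N X :=
      Quotient.lift (fun x => q (g • x)) fun x x' h => hwd x x' (Quotient.sound h)
    have ht₀ : ∀ x, t₀ (q x) = q (g • x) := fun x => rfl
    have htt : ∀ z, t₀ (t₀ z) = z := by
      intro z
      obtain ⟨x, rfl⟩ := hqs z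
      rw [ht₀, ht₀, eq_comm, hq]
      exact ⟨⟨g * g, (Subgroup.mul_mem_iff_of_index_two hidx).2 Iff.rfl⟩, by
        rw [Subgroup.mk_smul, mul_smul]⟩
    let t : Equiv.Perm (MulAction.orbitRel.Quotient N X) := ⟨t₀, t₀, htt, htt⟩
    let π' : MulAction.orbitRel.Quotient N X → Y := Quotient.lift π fun x x' h => by
      obtain ⟨n, hn⟩ := (hq x x').1 (Quotient.sound h)
      exact (hπ x x').2 ⟨n, hn⟩
    have hπ' : ∀ x, π' (q x) = π x := fun x => rfl
    have hK' : IsLowerSet {s : Finset (MulAction.orbitRel.Quotient N X) |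
        ({x | q x ∈ s} : Finset X) ∈ K} := fun s r hrs hs =>
      hK (Finset.monotone_filter_right _ fun x _ hx => hrs hx) hs
    have htK : ∀ s ∈ {s : Finset (MulAction.orbitRel.Quotient N X) |
        ({x | q x ∈ s} : Finset X) ∈ K}, s.map t.toEmbedding ∈
        {s : Finset (MulAction.orbitRel.Quotient N X) | ({x | q x ∈ s} : Finset X) ∈ K} := by
      intro s hs
      have := hinv g _ hs
      change ({x | q x ∈ s.map t.toEmbedding} : Finset X) ∈ K
      convert this using 1
      ext x
      simp only [Finset.mem_filter_univ, Finset.mem_map_equiv, MulAction.toPerm_symm_apply]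
      change t₀ (q x) ∈ s ↔ _
      rw [ht₀]
      have : q (g • x) = q (g⁻¹ • x) := by
        rw [← htt (q (g⁻¹ • x)), ht₀, smul_inv_smul, ht₀]
      rw [this]
    have hmm : ∀ s : Finset (MulAction.orbitRel.Quotient N X),
        (s.map t.toEmbedding).map t.toEmbedding = s := by
      intro s
      ext z
      rw [Finset.mem_map_equiv, Finset.mem_map_equiv]
      change t₀ (t₀ z) ∈ s ↔ _
      rw [htt]
    have h2 := Acyclic.of_involution (t := t) (π := π') hK' h1 htt
      (fun s => ⟨fun h => by simpa only [hmm] using htK _ h, htK s⟩)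
      (fun y => by obtain ⟨x, rfl⟩ := hsurj y; exact ⟨q x, rfl⟩) (by
        intro z z'
        obtain ⟨x, rfl⟩ := hqs z
        obtain ⟨x', rfl⟩ := hqs z'
        change π x = π x' ↔ _ ∨ q x' = t₀ (q x)
        rw [hπ, ht₀, eq_comm, hq, eq_comm, hq]
        constructor
        · rintro ⟨p, rfl⟩
          by_cases hp : p ∈ N
          · exact Or.inl ⟨⟨p, hp⟩, rfl⟩
          · right
            refine ⟨⟨p * g⁻¹, (Subgroup.mul_mem_iff_of_index_two hidx).2 ?_⟩, ?_⟩
            · rw [inv_mem_iff]; exact iff_of_false hp hg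
            · rw [Subgroup.mk_smul, smul_smul, inv_mul_cancel_right]
        · rintro (⟨n, rfl⟩ | ⟨n, rfl⟩)
          · exact ⟨n, rfl⟩
          · exact ⟨n * g, mul_smul _ _ _⟩)
    convert h2 using 1
    ext s
    simp [hπ']

/-- Let `P` be a 2-group acting on a mod 2 acyclic complex, and let `γ` be an automorphism
permuting the orbits of `P`. Then the number of faces invariant under `P` and `γ` is even. -/
theorem Acyclic.even_card_invariant {P X : Type} [Group P] [Fintype X] [DecidableEq X]
    [MulAction P X] {k : ℕ} (hP : Nat.card P = 2 ^ k) {K : Set (Finset X)} (hK : IsLowerSet K)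
    (hac : Acyclic K) (hinv : ∀ (g : P) s, s ∈ K → s.map (MulAction.toPerm g).toEmbedding ∈ K)
    (γ : Equiv.Perm X) (hγ : ∀ (g : P) x, ∃ g' : P, γ (g • x) = g' • γ x)
    (hγK : ∀ s, s.map γ.toEmbedding ∈ K ↔ s ∈ K) :
    Even (Nat.card {s : Finset X // s ∈ K ∧ (∀ (g : P), ∀ x ∈ s, g • x ∈ s) ∧
      ∀ x ∈ s, γ x ∈ s}) := by
  classical
  let q : X → MulAction.orbitRel.Quotient P X := Quotient.mk _
  have hq : ∀ x x', q x = q x' ↔ ∃ n : P, n • x = x' := by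
    intro x x'
    rw [eq_comm]
    exact Quotient.eq.trans MulAction.orbitRel_apply
  have hqs : Function.Surjective q := Quotient.mk_surjective
  have h1 := Acyclic.of_two_group k hP hK hac hinv hqs hq
  have hK' : IsLowerSet {s : Finset (MulAction.orbitRel.Quotient P X) |
      ({x | q x ∈ s} : Finset X) ∈ K} := fun s r hrs hs =>
    hK (Finset.monotone_filter_right _ fun x _ hx => hrs hx) hs
  let δ₀ : MulAction.orbitRel.Quotient P X → MulAction.orbitRel.Quotient P X :=
    Quotient.lift (fun x => q (γ x)) fun x x' h => by
      obtain ⟨n, rfl⟩ := (hq x x').1 (Quotient.sound h)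
      obtain ⟨n', hn'⟩ := hγ n x
      exact (hq _ _).2 ⟨n', hn'.symm⟩
  have hδ₀ : ∀ x, δ₀ (q x) = q (γ x) := fun x => rfl
  have hδs : Function.Surjective δ₀ := by
    intro z
    obtain ⟨x, rfl⟩ := hqs z
    exact ⟨q (γ.symm x), by rw [hδ₀, Equiv.apply_symm_apply]⟩
  let δ : Equiv.Perm (MulAction.orbitRel.Quotient P X) :=
    Equiv.ofBijective δ₀ (Finite.surjective_iff_bijective.1 hδs)
  have hδ : ∀ x, δ (q x) = q (γ x) := fun x => rfl
  have hδ' : ∀ x, δ.symm (q x) = q (γ.symm x) := fun x => by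
    rw [Equiv.symm_apply_eq, hδ, Equiv.apply_symm_apply]
  have h2 := h1.even_card_fixed hK' (g := δ) (fun s => by
    refine Iff.trans ?_ (hγK ({x | q x ∈ s} : Finset X))
    change ({x | q x ∈ s.map δ.toEmbedding} : Finset X) ∈ K ↔ _
    convert Iff.rfl using 2
    ext x
    simp [Finset.mem_map_equiv, hδ'])
  have hfix : ∀ {Z : Type} (σ : Equiv.Perm Z) (s : Finset Z),
      s.map σ.toEmbedding = s ↔ ∀ x ∈ s, σ x ∈ s := by
    intro Z σ s
    constructor
    · intro h x hx
      rw [← h]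
      exact Finset.mem_map_of_mem _ hx
    · intro h
      refine Finset.eq_of_subset_of_card_le (fun x hx => ?_) (by simp)
      obtain ⟨y, hy, rfl⟩ := Finset.mem_map.1 hx
      exact h y hy
  convert h2 using 1
  refine Nat.card_congr (Equiv.symm (Equiv.ofBijective (fun s => ⟨({x | q x ∈ s.1} : Finset X), s.2.1, ?_, ?_⟩)
    ⟨?_, ?_⟩))
  · intro g x hx
    rw [Finset.mem_filter_univ] at hx ⊢
    rwa [← (hq x (g • x)).2 ⟨g, rfl⟩]
  · intro x hx
    rw [Finset.mem_filter_univ] at hx ⊢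
    exact (hfix δ _).1 s.2.2 _ hx
  · rintro ⟨s, hs⟩ ⟨r, hr⟩ h
    refine Subtype.ext ?_
    ext z
    obtain ⟨x, rfl⟩ := hqs z
    simpa using Finset.ext_iff.1 (congrArg Subtype.val h) x
  · rintro ⟨r, hr, hrP, hrγ⟩
    have hr' : ({x | q x ∈ r.image q} : Finset X) = r := by
      ext x
      simp only [Finset.mem_filter_univ, Finset.mem_image]
      constructor
      · rintro ⟨x', hx', h⟩
        obtain ⟨n, rfl⟩ := (hq _ _).1 h
        exact hrP n _ hx'
      · exact fun hx => ⟨x, hx, rfl⟩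
    refine ⟨⟨r.image q, ?_, ?_⟩, Subtype.ext hr'⟩
    · change _ ∈ K
      rwa [hr']
    · rw [hfix]
      intro z hz
      obtain ⟨x, hx, rfl⟩ := Finset.mem_image.1 hz
      exact Finset.mem_image.2 ⟨γ x, hrγ x hx, rfl⟩

end TwoGroup

section Trees

lemma DecisionTree.exists_eval_eq {ι : Type} (A : Finset ι) :
    ∀ f : (ι → Bool) → Bool, (∀ x y, (∀ i ∈ A, x i = y i) → f x = f y) →
      ∃ T : DecisionTree ι, ∀ x, T.eval x = f x := by
  classical
  induction A using Finset.induction_on with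
  | empty => exact fun f hf => ⟨.leaf (f fun _ => true), fun x => hf _ _ (by simp)⟩
  | insert a A ha ih =>
    intro f hf
    have key : ∀ b, ∃ T : DecisionTree ι, ∀ x, T.eval x = f (Function.update x a b) := fun b =>
      ih _ fun x y h => hf _ _ fun i hi => by
        by_cases hia : i = a
        · subst hia; simp
        · simpa [hia] using h i ((Finset.mem_insert.1 hi).resolve_left hia)
    obtain ⟨T₁, h₁⟩ := key true
    obtain ⟨T₂, h₂⟩ := key false
    refine ⟨.node a T₁ T₂, fun x => ?_⟩
    rw [DecisionTree.eval, h₁, h₂]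
    cases h : x a <;> simp [← h]

/-- The input equal to (the indicator of) `s` on `A` and to `ρ` off `A`. -/
def inputOn {ι : Type} [DecidableEq ι] (A : Finset ι) (ρ : ι → Bool) (s : Finset ι) : ι → Bool :=
  fun i => if i ∈ A then decide (i ∈ s) else ρ i

lemma acyclic_of_depth_lt_card {ι : Type} [Fintype ι] [DecidableEq ι] (T : DecisionTree ι) :
    ∀ (A : Finset ι) (ρ : ι → Bool), IsLowerSet {s | s ⊆ A ∧ T.eval (inputOn A ρ s) = true} →
      T.depth < A.card → Acyclic {s | s ⊆ A ∧ T.eval (inputOn A ρ s) = true} := by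
  induction T with
  | leaf b =>
    intro A ρ _ hA
    obtain ⟨a, ha⟩ := Finset.card_pos.1 ((Nat.zero_le _).trans_lt hA)
    exact acyclic_of_cone a fun s hs => ⟨Finset.insert_subset ha hs.1, hs.2⟩
  | node i t f iht ihf =>
    intro A ρ hK hA
    rw [DecisionTree.depth] at hA
    by_cases hi : i ∈ A
    · have hupd : ∀ (b : Bool) (s : Finset ι), (decide (i ∈ s) = b) →
          inputOn (A.erase i) (Function.update ρ i b) (s.erase i) = inputOn A ρ s := by
        intro b s hb
        ext j
        by_cases hj : j = i
        · subst hj; simp [inputOn, hi, hb]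
        · simp [inputOn, hj]
      have hlink : {s | i ∉ s ∧ insert i s ∈
          {s | s ⊆ A ∧ (DecisionTree.node i t f).eval (inputOn A ρ s) = true}} =
          {s | s ⊆ A.erase i ∧
            t.eval (inputOn (A.erase i) (Function.update ρ i true) s) = true} := by
        ext s
        by_cases his : i ∈ s
        · simp [his, Finset.subset_erase]
        · have h1 := hupd true (insert i s) (by simp)
          rw [Finset.erase_insert his] at h1
          have h2 : inputOn A ρ (insert i s) i = true := by simp [inputOn, hi]
          simp [his, Finset.subset_erase, Finset.insert_subset_iff, hi, h1, DecisionTree.eval, h2]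
      have hdel : {s | i ∉ s ∧ s ∈
          {s | s ⊆ A ∧ (DecisionTree.node i t f).eval (inputOn A ρ s) = true}} =
          {s | s ⊆ A.erase i ∧
            f.eval (inputOn (A.erase i) (Function.update ρ i false) s) = true} := by
        ext s
        by_cases his : i ∈ s
        · simp [his, Finset.subset_erase]
        · have h1 := hupd false s (by simpa using his)
          rw [Finset.erase_eq_of_notMem his] at h1
          have h2 : inputOn A ρ s i = false := by simp [inputOn, hi, his]
          simp [his, Finset.subset_erase, h1, DecisionTree.eval, h2]
      have hcard := Finset.card_erase_of_mem hi
      refine acyclic_of_link_of_deletion hK i ?_ ?_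
      · rw [hlink]
        refine iht _ _ ?_ (by omega)
        rw [← hlink]
        exact fun s r hrs hs => ⟨fun h => hs.1 (hrs h), hK (Finset.insert_subset_insert i hrs) hs.2⟩
      · rw [hdel]
        refine ihf _ _ ?_ (by omega)
        rw [← hdel]
        exact fun s r hrs hs => ⟨fun h => hs.1 (hrs h), hK hrs hs.2⟩
    · have hρ : ∀ s, inputOn A ρ s i = ρ i := fun s => if_neg hi
      simp only [DecisionTree.eval, hρ] at hK ⊢
      cases h : ρ i <;> simp only [h, if_true, Bool.false_eq_true, if_false] at hK ⊢
      · exact ihf _ _ hK (by omega)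
      · exact iht _ _ hK (by omega)

/-- If a decision tree of depth less than the number of free variables computes, after fixing the
remaining variables, the membership predicate of a complex `K`, then `K` is acyclic. -/
theorem acyclic_of_decisionTree {ι X : Type} [Fintype X] [DecidableEq X] [Finite ι] (j : X ↪ ι)
    (ρ : ι → Bool) (T : DecisionTree ι) (hT : T.depth < Fintype.card X) {K : Set (Finset X)}
    (hK : IsLowerSet K)
    (hTK : ∀ x : ι → Bool, (∀ i ∉ Set.range j, x i = ρ i) →
      (T.eval x = true ↔ ({a | x (j a) = true} : Finset X) ∈ K)) : Acyclic K := by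
  classical
  have := Fintype.ofFinite ι
  have hmem : ∀ s : Finset ι, s ⊆ Finset.univ.map j →
      (T.eval (inputOn (Finset.univ.map j) ρ s) = true ↔ ({a | j a ∈ s} : Finset X) ∈ K) := by
    intro s _
    rw [hTK (inputOn (Finset.univ.map j) ρ s) fun i hi => if_neg (by simpa using hi)]
    simp [inputOn]
  have hL : IsLowerSet {s | s ⊆ Finset.univ.map j ∧
      T.eval (inputOn (Finset.univ.map j) ρ s) = true} := by
    rintro s r hrs ⟨h1, h2⟩
    have h3 : r ⊆ Finset.univ.map j := Finset.Subset.trans hrs h1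
    exact ⟨h3, (hmem r h3).2 (hK (Finset.monotone_filter_right _ fun x _ hx => hrs hx)
      ((hmem s h1).1 h2))⟩
  have h1 := acyclic_of_depth_lt_card T (Finset.univ.map j) ρ hL (by simpa using hT)
  have h2 := (acyclic_map_iff j hL fun s hs y hy => by simpa using hs.1 hy).2 h1
  convert h2 using 1
  ext s
  have h3 : s.map j ⊆ Finset.univ.map j := Finset.map_subset_map.2 (Finset.subset_univ s)
  change _ ↔ _ ∧ _
  rw [hmem _ h3]
  simp [h3]

end Trees

section LivePairs

variable {U B L : Type}

/-- The pairs of distinct vertices not both lying over `L`. -/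
def LivePair (κ : U → B ⊕ L) : Type :=
  {e : Sym2 U // ¬ e.IsDiag ∧ ∃ v ∈ e, (κ v).isLeft}

noncomputable instance (κ : U → B ⊕ L) [Finite U] : Fintype (LivePair κ) := by
  classical
  have := Fintype.ofFinite U
  exact Fintype.ofInjective (Subtype.val : LivePair κ → Sym2 U) Subtype.val_injective

noncomputable instance (κ : U → B ⊕ L) : DecidableEq (LivePair κ) := Classical.decEq _

namespace LivePair

variable {κ : U → B ⊕ L}

/-- Apply an injective map preserving `κ` to a live pair. -/
def map (σ : U → U) (hσ : Function.Injective σ) (hκ : ∀ u, κ (σ u) = κ u) (x : LivePair κ) :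
    LivePair κ :=
  ⟨x.1.map σ, by rw [Sym2.isDiag_map hσ]; exact x.2.1, by
    obtain ⟨v, hv, h⟩ := x.2.2
    exact ⟨σ v, Sym2.mem_map.2 ⟨v, hv, rfl⟩, by rwa [hκ]⟩⟩

/-- The permutation of the live pairs induced by a permutation of the vertices preserving `κ`. -/
def perm (σ : Equiv.Perm U) (hκ : ∀ u, κ (σ u) = κ u) : Equiv.Perm (LivePair κ) where
  toFun := map σ σ.injective hκ
  invFun := map σ.symm σ.symm.injective fun u => by rw [← hκ, Equiv.apply_symm_apply]
  left_inv x := Subtype.ext <| by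
    change (x.1.map σ).map σ.symm = x.1
    rw [Sym2.map_map, Equiv.symm_comp_self, Sym2.map_id]; rfl
  right_inv x := Subtype.ext <| by
    change (x.1.map σ.symm).map σ = x.1
    rw [Sym2.map_map, Equiv.self_comp_symm, Sym2.map_id]; rfl

lemma coe_perm (σ : Equiv.Perm U) (hκ : ∀ u, κ (σ u) = κ u) (x : LivePair κ) :
    (perm σ hκ x).1 = x.1.map σ := rfl

/-- The action on the live pairs induced by an action on the vertices preserving `κ`. -/
@[reducible]
def mulAction {P : Type} [Group P] [MulAction P U] (hκ : ∀ (g : P) u, κ (g • u) = κ u) :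
    MulAction P (LivePair κ) where
  smul g := perm (MulAction.toPerm g) (hκ g)
  one_smul x := Subtype.ext <| by
    change x.1.map _ = x.1
    convert congrFun Sym2.map_id x.1
    · exact one_smul P _
    · rfl
  mul_smul g g' x := Subtype.ext <| by
    change x.1.map _ = (x.1.map _).map _
    rw [Sym2.map_map]
    congr 1
    ext u
    exact mul_smul g g' u

/-- The graph consisting of a set of live pairs together with the complete multipartite graph
whose parts are the fibres over `L`. -/
def graph (s : Finset (LivePair κ)) : SimpleGraph U where
  Adj u v := (∃ x ∈ s, x.1 = s(u, v)) ∨ ∃ p p', κ u = Sum.inr p ∧ κ v = Sum.inr p' ∧ p ≠ p'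
  symm := ⟨by
    rintro u v (⟨x, hx, h⟩ | ⟨p, p', h, h', hp⟩)
    · exact Or.inl ⟨x, hx, h.trans Sym2.eq_swap⟩
    · exact Or.inr ⟨p', p, h', h, hp.symm⟩⟩
  loopless := ⟨by
    rintro u (⟨x, -, h⟩ | ⟨p, p', h, h', hp⟩)
    · exact x.2.1 (by rw [h]; exact rfl)
    · exact hp (Sum.inr.inj (h.symm.trans h'))⟩

lemma graph_adj {s : Finset (LivePair κ)} {u v : U} : (graph s).Adj u v ↔
    (∃ x ∈ s, x.1 = s(u, v)) ∨ ∃ p p', κ u = Sum.inr p ∧ κ v = Sum.inr p' ∧ p ≠ p' := Iff.rfl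

lemma graph_adj_of_live {s : Finset (LivePair κ)} {u v : U} (h : (κ u).isLeft ∨ (κ v).isLeft) :
    (graph s).Adj u v ↔ ∃ x ∈ s, x.1 = s(u, v) := by
  rw [graph_adj]
  refine or_iff_left ?_
  rintro ⟨p, p', h1, h2, -⟩
  simp [h1, h2] at h

lemma mem_iff_graph_adj {s : Finset (LivePair κ)} {u v : U} {x : LivePair κ} (hx : x.1 = s(u, v)) :
    x ∈ s ↔ (graph s).Adj u v := by
  rw [graph_adj_of_live]
  · refine ⟨fun h => ⟨x, h, hx⟩, ?_⟩
    rintro ⟨y, hy, h⟩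
    rwa [Subtype.ext (hx.trans h.symm)]
  · obtain ⟨w, hw, h⟩ := x.2.2
    rw [hx, Sym2.mem_iff] at hw
    rcases hw with rfl | rfl
    · exact Or.inl h
    · exact Or.inr h

lemma graph_injective : Function.Injective (graph (κ := κ)) := by
  intro s r h
  ext x
  obtain ⟨⟨u, v⟩, hx⟩ := Quot.exists_rep x.1
  rw [mem_iff_graph_adj hx.symm, mem_iff_graph_adj hx.symm, h]

lemma graph_mono {s r : Finset (LivePair κ)} (h : s ⊆ r) : graph s ≤ graph r := by
  intro u v
  exact Or.imp_left fun ⟨x, hx, hx'⟩ => ⟨x, h hx, hx'⟩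

lemma graph_map_adj (σ : Equiv.Perm U) (hκ : ∀ u, κ (σ u) = κ u) (s : Finset (LivePair κ))
    (u v : U) : (graph (s.map (perm σ hκ).toEmbedding)).Adj (σ u) (σ v) ↔ (graph s).Adj u v := by
  simp only [graph_adj, hκ, Finset.mem_map, exists_exists_and_eq_and]
  refine or_congr_left (exists_congr fun x => and_congr_right fun _ => ?_)
  change x.1.map σ = Sym2.map σ s(u, v) ↔ _
  exact (Sym2.map.injective σ.injective).eq_iff

end LivePair

lemma ContainsCopy.mono {V : Type} {H : SimpleGraph V} {G G' : SimpleGraph U} (hG : G ≤ G')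
    (h : ContainsCopy H G) : ContainsCopy H G' := by
  obtain ⟨f, hf, hf'⟩ := h
  exact ⟨f, hf, fun v w hvw => hG (hf' v w hvw)⟩

lemma ContainsCopy.of_injective {V U' : Type} {H : SimpleGraph V} {G : SimpleGraph U}
    {G' : SimpleGraph U'} {σ : U → U'} (hσ : Function.Injective σ)
    (hadj : ∀ u v, G.Adj u v → G'.Adj (σ u) (σ v)) (h : ContainsCopy H G) :
    ContainsCopy H G' := by
  obtain ⟨f, hf, hf'⟩ := h
  exact ⟨σ ∘ f, hσ.comp hf, fun v w hvw => hadj _ _ (hf' v w hvw)⟩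

lemma LivePair.containsCopy_graph_map {V : Type} (H : SimpleGraph V) {κ : U → B ⊕ L}
    (σ : Equiv.Perm U) (hκ : ∀ u, κ (σ u) = κ u) (s : Finset (LivePair κ)) :
    ContainsCopy H (graph (s.map (perm σ hκ).toEmbedding)) ↔ ContainsCopy H (graph s) := by
  constructor
  · refine ContainsCopy.of_injective σ.symm.injective fun u v h => ?_
    rw [← graph_map_adj σ hκ]
    simpa using h
  · exact ContainsCopy.of_injective σ.injective fun u v h => (graph_map_adj σ hκ s u v).2 h

/-- A blow-up with large parts contains a copy of `H` if and only if there is a homomorphism from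
`H` to the base graph. -/
lemma containsCopy_comap_iff {V Q : Type} (H : SimpleGraph V) {κ : U → Q}
    (hfib : ∀ q, ∃ e : V → U, Function.Injective e ∧ ∀ v, κ (e v) = q) (R : SimpleGraph Q) :
    ContainsCopy H (R.comap κ) ↔ Nonempty (H →g R) := by
  constructor
  · rintro ⟨f, -, hf⟩
    exact ⟨⟨κ ∘ f, fun {v w} h => hf v w h⟩⟩
  · rintro ⟨φ⟩
    choose e he he' using hfib
    refine ⟨fun v => e (φ v) v, fun v w h => ?_, fun v w h => ?_⟩
    · have h1 : φ v = φ w := by rw [← he' (φ v) v, ← he' (φ w) w]; exact congrArg κ h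
      simp only [h1] at h
      exact he _ h
    · change R.Adj _ _
      rw [he', he']
      exact φ.map_rel h

/-- If `H`-freeness, restricted to the live pairs, is computed by a decision tree which is not of
full depth, then an even number of graphs on the set of orbits have no homomorphism from `H`. -/
theorem even_card_quotient_graphs {V ι P : Type} [Finite U] [Finite ι] [Group P] [MulAction P U]
    (H : SimpleGraph V) {κ : U → B ⊕ L} {k : ℕ} (hP : Nat.card P = 2 ^ k)
    (hPκ : ∀ (g : P) u, κ (g • u) = κ u)
    (γ : Equiv.Perm U) (hγκ : ∀ u, κ (γ u) = κ u)
    (hγ : ∀ g : P, ∃ g' : P, ∀ u, γ (g • u) = g' • γ u)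
    (hfib : ∀ q, ∃ e : V → U, Function.Injective e ∧ ∀ v, κ (e v) = q)
    (horb : ∀ r : U → U → Prop, (∀ u v, r u v → r v u) →
      (∀ (g : P) u v, r u v → r (g • u) (g • v)) → (∀ u v, r u v → r (γ u) (γ v)) →
      ∀ u v u' v', u ≠ v → u' ≠ v' → κ u = κ u' → κ v = κ v' → (κ u).isLeft → r u v → r u' v')
    (j : LivePair κ ↪ ι) (ρ : ι → Bool) (T : DecisionTree ι)
    (hT : T.depth < Fintype.card (LivePair κ))
    (hTH : ∀ x : ι → Bool, (∀ i ∉ Set.range j, x i = ρ i) → (T.eval x = true ↔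
      ¬ ContainsCopy H (LivePair.graph ({a | x (j a) = true} : Finset (LivePair κ)))))
    [Nonempty V] :
    Even (Nat.card {R : SimpleGraph (B ⊕ L) // (∀ p p' : L, p ≠ p' →
      R.Adj (Sum.inr p) (Sum.inr p')) ∧ IsEmpty (H →g R)}) := by
  classical
  let K : Set (Finset (LivePair κ)) := {s | ¬ ContainsCopy H (LivePair.graph s)}
  have hK : IsLowerSet K := fun s r hrs hs h => hs (h.mono (LivePair.graph_mono hrs))
  have hac : Acyclic K := acyclic_of_decisionTree j ρ T hT hK hTH
  let _ := LivePair.mulAction hPκ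
  have hsmul : ∀ (g : P) (x : LivePair κ), (g • x).1 = x.1.map (g • ·) := fun g x => rfl
  have h1 := hac.even_card_invariant hP hK
    (fun g s hs => fun h => hs ((LivePair.containsCopy_graph_map H (MulAction.toPerm g)
      (hPκ g) s).1 h))
    (LivePair.perm γ hγκ) (fun g x => by
      obtain ⟨g', hg'⟩ := hγ g
      refine ⟨g', Subtype.ext ?_⟩
      rw [LivePair.coe_perm, hsmul, hsmul, LivePair.coe_perm, Sym2.map_map, Sym2.map_map]
      congr 1
      ext u
      exact hg' u)
    (fun s => not_congr (LivePair.containsCopy_graph_map H γ hγκ s))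
  have hκs : Function.Surjective κ := fun q => by
    obtain ⟨e, -, he⟩ := hfib q
    obtain ⟨v⟩ := ‹Nonempty V›
    exact ⟨e v, he v⟩
  let S : SimpleGraph (B ⊕ L) → Finset (LivePair κ) := fun R => {x | x.1 ∈ (R.comap κ).edgeSet}
  have hS : ∀ R : SimpleGraph (B ⊕ L), (∀ p p' : L, p ≠ p' → R.Adj (Sum.inr p) (Sum.inr p')) →
      LivePair.graph (S R) = R.comap κ := by
    intro R hR
    ext u v
    rw [LivePair.graph_adj]
    constructor
    · rintro (⟨x, hx, h⟩ | ⟨p, p', h, h', hp⟩)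
      · simpa [S, h] using hx
      · rw [SimpleGraph.comap_adj, h, h']
        exact hR p p' hp
    · intro h
      rw [SimpleGraph.comap_adj] at h
      by_cases hl : (κ u).isLeft ∨ (κ v).isLeft
      · left
        have hne : u ≠ v := by rintro rfl; exact R.loopless.irrefl _ h
        refine ⟨⟨s(u, v), by simpa using hne, ?_⟩, ?_, rfl⟩
        · rcases hl with hl | hl
          · exact ⟨u, by simp, hl⟩
          · exact ⟨v, by simp, hl⟩
        · exact (Finset.mem_filter_univ _).2 (by simpa using h)
      · right
        push Not at hl
        obtain ⟨p, hp⟩ := Sum.isRight_iff.1 (Sum.not_isLeft.1 hl.1)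
        obtain ⟨p', hp'⟩ := Sum.isRight_iff.1 (Sum.not_isLeft.1 hl.2)
        refine ⟨p, p', hp, hp', ?_⟩
        rintro rfl
        rw [hp, hp'] at h
        exact R.loopless.irrefl _ h
  convert h1 using 1
  refine Nat.card_congr (Equiv.ofBijective (fun R => ⟨S R.1, ?_, ?_, ?_⟩) ⟨?_, ?_⟩)
  · change ¬ _
    rw [hS _ R.2.1, containsCopy_comap_iff H hfib, not_nonempty_iff]
    exact R.2.2
  · intro g x hx
    simp only [S, Finset.mem_filter_univ, hsmul] at hx ⊢
    revert hx
    induction x.1 with | _ u v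
    simp [hPκ]
  · intro x hx
    simp only [S, Finset.mem_filter_univ, LivePair.coe_perm] at hx ⊢
    revert hx
    induction x.1 with | _ u v
    simp [hγκ]
  · rintro ⟨R, hR⟩ ⟨R', hR'⟩ h
    have h2 : R.comap κ = R'.comap κ := by
      rw [← hS R hR.1, ← hS R' hR'.1]
      exact congrArg LivePair.graph (congrArg Subtype.val h)
    refine Subtype.ext ?_
    ext q q'
    obtain ⟨u, rfl⟩ := hκs q
    obtain ⟨v, rfl⟩ := hκs q'
    rw [← SimpleGraph.comap_adj, h2, SimpleGraph.comap_adj]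
  · rintro ⟨s, hs, hsP, hsγ⟩
    have hadj : ∀ u v u' v', u ≠ v → u' ≠ v' → κ u = κ u' → κ v = κ v' →
        (κ u).isLeft ∨ (κ v).isLeft → (LivePair.graph s).Adj u v →
        (LivePair.graph s).Adj u' v' := by
      have h3 := horb (fun u v => ∃ x ∈ s, x.1 = s(u, v))
        (fun u v ⟨x, hx, h⟩ => ⟨x, hx, h.trans Sym2.eq_swap⟩)
        (fun g u v ⟨x, hx, h⟩ => ⟨g • x, hsP g x hx, by rw [hsmul, h, Sym2.map_mk]⟩)
        (fun u v ⟨x, hx, h⟩ => ⟨_, hsγ x hx, by rw [LivePair.coe_perm, h, Sym2.map_mk]⟩)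
      intro u v u' v' hne hne' hu hv hl h
      rw [LivePair.graph_adj_of_live hl] at h
      rw [LivePair.graph_adj_of_live (hu ▸ hv ▸ hl)]
      rcases hl with hl | hl
      · exact h3 u v u' v' hne hne' hu hv hl h
      · obtain ⟨x, hx, h⟩ := h
        obtain ⟨y, hy, h'⟩ := h3 v u v' u' hne.symm hne'.symm hv hu hl
          ⟨x, hx, h.trans Sym2.eq_swap⟩
        exact ⟨y, hy, h'.trans Sym2.eq_swap⟩
    have hirr : ∀ u v, κ u = κ v → ¬ (LivePair.graph s).Adj u v := by
      intro u v huv h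
      by_cases hl : (κ u).isLeft
      · obtain ⟨e, he, he'⟩ := hfib (κ u)
        refine hs ⟨e, he, fun a b hab => ?_⟩
        exact hadj u v _ _ h.ne (fun h' => hab.ne (he h')) (he' a).symm
          (huv.symm.trans (he' b).symm) (Or.inl hl) h
      · obtain ⟨p, hp⟩ := Sum.isRight_iff.1 (Sum.not_isLeft.1 hl)
        rcases h with ⟨x, hx, h⟩ | ⟨p, p', h, h', hne⟩
        · obtain ⟨w, hw, hw'⟩ := x.2.2
          rw [h, Sym2.mem_iff] at hw
          rcases hw with rfl | rfl
          · exact hl hw'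
          · exact hl (huv ▸ hw')
        · exact hne (Sum.inr.inj (h.symm.trans (huv.trans h')))
    let R : SimpleGraph (B ⊕ L) :=
      { Adj := fun q q' => ∃ u v, κ u = q ∧ κ v = q' ∧ (LivePair.graph s).Adj u v
        symm := ⟨fun q q' ⟨u, v, hu, hv, h⟩ => ⟨v, u, hv, hu, h.symm⟩⟩
        loopless := ⟨fun q ⟨u, v, hu, hv, h⟩ => hirr u v (hu.trans hv.symm) h⟩ }
    have hRc : R.comap κ = LivePair.graph s := by
      ext u' v'
      rw [SimpleGraph.comap_adj]
      constructor
      · rintro ⟨u, v, hu, hv, h⟩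
        have hne : u' ≠ v' := by
          rintro rfl
          exact hirr u v (hu.trans hv.symm) h
        by_cases hl : (κ u).isLeft ∨ (κ v).isLeft
        · exact hadj u v u' v' h.ne hne hu hv hl h
        · rcases h with ⟨x, hx, h⟩ | ⟨p, p', h, h', hne⟩
          · obtain ⟨w, hw, hw'⟩ := x.2.2
            rw [h, Sym2.mem_iff] at hw
            refine absurd ?_ hl
            rcases hw with rfl | rfl
            · exact Or.inl hw'
            · exact Or.inr hw'
          · exact Or.inr ⟨p, p', hu.symm.trans h, hv.symm.trans h', hne⟩
      · exact fun h => ⟨u', v', rfl, rfl, h⟩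
    have hR : ∀ p p' : L, p ≠ p' → R.Adj (Sum.inr p) (Sum.inr p') := by
      intro p p' hne
      obtain ⟨u, hu⟩ := hκs (Sum.inr p)
      obtain ⟨v, hv⟩ := hκs (Sum.inr p')
      exact ⟨u, v, hu, hv, Or.inr ⟨p, p', hu, hv, hne⟩⟩
    refine ⟨⟨R, hR, ?_⟩, Subtype.ext (LivePair.graph_injective ((hS R hR).trans hRc))⟩
    rw [← not_nonempty_iff, ← containsCopy_comap_iff H hfib, hRc]
    exact hs

end LivePairs

section BinaryTree

variable {j : ℕ}

/-- The first `n` coordinates of `x` and `y` agree. -/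
def Agree (n : ℕ) (x y : Fin j → Bool) : Prop := ∀ m : Fin j, m.val < n → x m = y m

lemma Agree.symm {n : ℕ} {x y : Fin j → Bool} (h : Agree n x y) : Agree n y x :=
  fun m hm => (h m hm).symm

lemma Agree.trans {n : ℕ} {x y z : Fin j → Bool} (h : Agree n x y) (h' : Agree n y z) :
    Agree n x z := fun m hm => (h m hm).trans (h' m hm)

lemma Agree.mono {m n : ℕ} (hmn : m ≤ n) {x y : Fin j → Bool} (h : Agree n x y) : Agree m x y :=
  fun i hi => h i (hi.trans_le hmn)

lemma agree_self (n : ℕ) (x : Fin j → Bool) : Agree n x x := fun _ _ => rfl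

lemma agree_succ_iff {i : Fin j} {x y : Fin j → Bool} :
    Agree (i + 1) x y ↔ Agree i x y ∧ x i = y i := by
  constructor
  · exact fun h => ⟨h.mono (Nat.le_succ _), h i (Nat.lt_succ_self _)⟩
  · rintro ⟨h, h'⟩ m hm
    rcases Nat.lt_succ_iff_lt_or_eq.1 hm with h1 | h1
    · exact h m h1
    · rwa [Fin.ext h1]

/-- The first coordinate where `x` and `y` differ is `i`. -/
def FirstDiff (i : Fin j) (x y : Fin j → Bool) : Prop := Agree i x y ∧ ¬ Agree (i + 1) x y

lemma FirstDiff.symm {i : Fin j} {x y : Fin j → Bool} (h : FirstDiff i x y) : FirstDiff i y x :=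
  ⟨h.1.symm, fun h' => h.2 h'.symm⟩

lemma FirstDiff.ne_apply {i : Fin j} {x y : Fin j → Bool} (h : FirstDiff i x y) : x i ≠ y i :=
  fun h' => h.2 (agree_succ_iff.2 ⟨h.1, h'⟩)

lemma FirstDiff.unique {i i' : Fin j} {x y : Fin j → Bool} (h : FirstDiff i x y)
    (h' : FirstDiff i' x y) : i = i' := by
  rcases lt_trichotomy i i' with hlt | heq | hlt
  · exact absurd (h'.1 i hlt) h.ne_apply
  · exact heq
  · exact absurd (h.1 i' hlt) h'.ne_apply

lemma exists_firstDiff {x y : Fin j → Bool} (h : x ≠ y) : ∃ i, FirstDiff i x y := by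
  obtain ⟨i, hi⟩ := Function.ne_iff.1 h
  obtain ⟨m, hm, hmin⟩ := WellFounded.has_min (α := Fin j) wellFounded_lt {m | x m ≠ y m} ⟨i, hi⟩
  refine ⟨m, fun m' hm' => ?_, fun h' => hm (h' m (Nat.lt_succ_self _))⟩
  by_contra hne
  exact hmin m' hne hm'

variable (j) in
/-- The automorphism group of the rooted binary tree of depth `j`, as a group of permutations of
the leaves. -/
def treeAut : Subgroup (Equiv.Perm (Fin j → Bool)) where
  carrier := {τ | ∀ n x y, Agree n (τ x) (τ y) ↔ Agree n x y}
  mul_mem' {σ τ} hσ hτ n x y := (hσ n (τ x) (τ y)).trans (hτ n x y)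
  one_mem' _ _ _ := Iff.rfl
  inv_mem' {τ} hτ n x y := by
    rw [← hτ]
    simp

lemma mem_treeAut {τ : Equiv.Perm (Fin j → Bool)} :
    τ ∈ treeAut j ↔ ∀ n x y, Agree n (τ x) (τ y) ↔ Agree n x y := Iff.rfl

lemma isPGroup_treeAut : IsPGroup 2 (treeAut j) := by
  rintro ⟨τ, hτ⟩
  have key : ∀ i ≤ j, ∀ x, Agree i ((τ ^ 2 ^ i) x) x := by
    intro i
    induction i with
    | zero => exact fun _ x m hm => absurd hm (Nat.not_lt_zero _)
    | succ i ih =>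
      intro hi x
      have hσ := pow_mem hτ (2 ^ i)
      set σ := τ ^ 2 ^ i with hσ'
      have hf := ih (by omega)
      rw [pow_succ 2 i, pow_mul, ← hσ', pow_two, Equiv.Perm.mul_apply]
      have h1 := mem_treeAut.1 hσ (i + 1) (σ x) x
      have e : i = (⟨i, hi⟩ : Fin j).val := rfl
      rw [e, agree_succ_iff, agree_succ_iff, ← e] at h1
      rw [e, agree_succ_iff, ← e]
      refine ⟨(hf _).trans (hf _), ?_⟩
      simp only [hf _, true_and] at h1
      revert h1
      cases σ (σ x) ⟨i, hi⟩ <;> cases σ x ⟨i, hi⟩ <;> cases x ⟨i, hi⟩ <;> simp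
  refine ⟨j, Subtype.ext (Equiv.ext fun x => ?_)⟩
  ext m
  exact key j le_rfl x m m.2

lemma exists_treeAut_apply_eq (x x' : Fin j → Bool) : ∃ τ ∈ treeAut j, τ x = x' := by
  refine ⟨Function.Involutive.toPerm (fun z m => xor (z m) (xor (x m) (x' m))) (fun z => ?_), ?_, ?_⟩
  · ext m; simp
  · intro n z z'
    refine forall_congr' fun m => imp_congr_right fun _ => ?_
    exact Bool.xor_left_inj
  · ext m
    change xor (x m) (xor (x m) (x' m)) = _
    rw [← Bool.xor_assoc, Bool.xor_self, Bool.false_xor]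

lemma exists_treeAut_apply_eq_of_not_agree {n : ℕ} {x y y' : Fin j → Bool} (hxy : ¬ Agree n x y)
    (hy : Agree n y y') : ∃ τ ∈ treeAut j, τ x = x ∧ τ y = y' := by
  classical
  let t : (Fin j → Bool) → Fin j → Bool := fun z =>
    if Agree n z y then fun m => xor (z m) (xor (y m) (y' m)) else z
  have hz : ∀ z, Agree n (t z) z := by
    intro z m hm
    by_cases h : Agree n z y
    · simp [t, h, hy m hm]
    · simp [t, h]
  have hz' : ∀ z, Agree n (t z) y ↔ Agree n z y := fun z =>
    ⟨fun h => (hz z).symm.trans h, fun h => (hz z).trans h⟩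
  have htt : ∀ z, t (t z) = z := by
    intro z
    by_cases h : Agree n z y
    · have h' := (hz' z).2 h
      ext m
      simp only [t] at h' ⊢
      rw [if_pos h', if_pos h]
      simp
    · simp [t, h]
  have hag : ∀ i z z', Agree i z z' → Agree i (t z) (t z') := by
    intro i z z' h
    by_cases hi : i ≤ n
    · exact ((hz z).mono hi).trans (h.trans ((hz z').symm.mono hi))
    · have h1 : Agree n z z' := h.mono (by omega)
      have h2 : Agree n z y ↔ Agree n z' y := ⟨h1.symm.trans, h1.trans⟩
      intro m hm
      by_cases h3 : Agree n z y
      · simp [t, h3, h2.1 h3, h m hm]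
      · simp [t, h3, mt h2.2 h3, h m hm]
  refine ⟨Function.Involutive.toPerm t htt, fun i z z' => ⟨fun h => ?_, hag i z z'⟩, ?_, ?_⟩
  · have := hag i _ _ h
    change Agree i (t (t z)) (t (t z')) at this
    rwa [htt, htt] at this
  · exact if_neg hxy
  · refine (if_pos (agree_self n y)).trans ?_
    ext m
    rw [← Bool.xor_assoc, Bool.xor_self, Bool.false_xor]

lemma exists_treeAut_of_firstDiff {i : Fin j} {x y x' y' : Fin j → Bool} (h : FirstDiff i x y)
    (h' : FirstDiff i x' y') : ∃ τ ∈ treeAut j, τ x = x' ∧ τ y = y' := by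
  obtain ⟨τ, hτ, rfl⟩ := exists_treeAut_apply_eq x x'
  have h1 : FirstDiff i (τ x) (τ y) := ⟨(hτ _ _ _).2 h.1, fun h2 => h.2 ((hτ _ _ _).1 h2)⟩
  obtain ⟨σ, hσ, h2, h3⟩ := exists_treeAut_apply_eq_of_not_agree (y' := y') h1.2 (by
    rw [agree_succ_iff]
    refine ⟨h1.1.symm.trans h'.1, ?_⟩
    have := h1.ne_apply
    have := h'.ne_apply
    revert this
    revert this
    cases (τ x) i <;> cases (τ y) i <;> cases y' i <;> simp)
  exact ⟨σ * τ, mul_mem hσ hτ, h2, h3⟩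

end BinaryTree

section OddCount

variable {j : ℕ} {L : Type}

/-- The graph on the leaves of the binary tree and `L` in which two leaves are adjacent if they
branch at a level in `A`, a leaf is adjacent to the elements of `N`, and `L` is a clique. -/
def levelGraph (A : Finset (Fin j)) (N : Finset L) : SimpleGraph ((Fin j → Bool) ⊕ L) where
  Adj
    | .inl x, .inl y => ∃ i ∈ A, FirstDiff i x y
    | .inl _, .inr p => p ∈ N
    | .inr p, .inl _ => p ∈ N
    | .inr p, .inr p' => p ≠ p'
  symm := ⟨by
    rintro (x | p) (y | p') h
    · obtain ⟨i, hi, h⟩ := h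
      exact ⟨i, hi, h.symm⟩
    · exact h
    · exact h
    · exact Ne.symm h⟩
  loopless := ⟨by
    rintro (x | p) h
    · obtain ⟨i, hi, h⟩ := h
      exact h.2 (agree_self _ _)
    · exact h rfl⟩

lemma levelGraph_injective : Function.Injective fun q : Finset (Fin j) × Finset L =>
    levelGraph q.1 q.2 := by
  rintro ⟨A, N⟩ ⟨A', N'⟩ h
  have h' : ∀ q q', (levelGraph A N).Adj q q' ↔ (levelGraph A' N').Adj q q' := fun q q' =>
    iff_of_eq (congrArg (fun G : SimpleGraph _ => G.Adj q q') h)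
  refine Prod.ext (Finset.ext fun i => ?_) (Finset.ext fun p =>
    h' (.inl fun _ => false) (.inr p))
  have hd : FirstDiff i (fun _ => false) (fun m => decide (m = i)) := by
    refine ⟨fun m hm => ?_, fun h => ?_⟩
    · have : m ≠ i := fun h => by rw [h] at hm; exact lt_irrefl _ hm
      simp [this]
    · simpa using h i (Nat.lt_succ_self _)
  have key : ∀ A : Finset (Fin j),
      (∃ i' ∈ A, FirstDiff i' (fun _ => false) fun m => decide (m = i)) ↔ i ∈ A := fun A =>
    ⟨fun ⟨i', hi', h⟩ => by rwa [hd.unique h], fun h => ⟨i, h, hd⟩⟩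
  rw [← key, ← key]
  exact h' (.inl _) (.inl _)

variable [Fintype L]

lemma isEmpty_hom_levelGraph_iff {V : Type} (H : SimpleGraph V)
    (hcol : ∀ m, H.Colorable m ↔ Fintype.card L < m) (A : Finset (Fin j)) (N : Finset L) :
    IsEmpty (H →g levelGraph A N) ↔ 2 ^ A.card + N.card ≤ Fintype.card L := by
  classical
  constructor
  · intro h
    by_contra! hlt
    refine h.false ?_
    have hc := ((hcol _).2 hlt).toColoring (α := (A → Bool) ⊕ N) (by simp)
    let ext : (A → Bool) → Fin j → Bool := fun f m => if hm : m ∈ A then f ⟨m, hm⟩ else false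
    let φ : (A → Bool) ⊕ N → (Fin j → Bool) ⊕ L := Sum.map ext Subtype.val
    have hφ : ∀ c c', c ≠ c' → (levelGraph A N).Adj (φ c) (φ c') := by
      rintro (f | p) (f' | p') hne
      · have hne' : ext f ≠ ext f' := by
          intro h'
          refine hne (congrArg Sum.inl (funext fun m => ?_))
          simpa [ext] using congrFun h' m
        obtain ⟨i, hi⟩ := exists_firstDiff hne'
        refine ⟨i, ?_, hi⟩
        by_contra hiA
        exact hi.ne_apply (by simp [ext, hiA])
      · exact p'.2
      · exact p.2
      · exact fun h' => hne (congrArg Sum.inr (Subtype.ext h'))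
    exact ⟨fun v => φ (hc v), fun h' => hφ _ _ (hc.valid h')⟩
  · intro hle
    refine ⟨fun φ => ?_⟩
    obtain ⟨e⟩ : Nonempty ((A → Bool) ↪ {p // p ∉ N}) := by
      refine Function.Embedding.nonempty_of_card_le ?_
      have : Fintype.card {p // p ∉ N} = Fintype.card L - N.card := by
        rw [Fintype.card_subtype_compl]; simp
      rw [this]
      simp
      omega
    let c : (Fin j → Bool) ⊕ L → L := Sum.elim (fun x => e fun i => x i) id
    have hc : ∀ q q', (levelGraph A N).Adj q q' → c q ≠ c q' := by
      rintro (x | p) (y | p') hadj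
      · obtain ⟨i, hi, h⟩ := hadj
        intro h'
        exact h.ne_apply (congrFun (e.injective (Subtype.ext h')) ⟨i, hi⟩)
      · rintro (h' : ((e _ : {p // p ∉ N}) : L) = p')
        exact (e _).2 (h' ▸ hadj)
      · rintro (h' : p = ((e _ : {p // p ∉ N}) : L))
        exact (e _).2 (h' ▸ hadj)
      · exact hadj
    have hcolor : H.Colorable (Fintype.card L) :=
      (SimpleGraph.Coloring.mk (fun v => c (φ v)) fun {v w} h => hc _ _ (φ.map_rel h)).colorable
    exact lt_irrefl _ ((hcol _).1 hcolor)

lemma odd_card_level_data (a l : ℕ) (hl : 0 < l) (hal : l < 2 ^ 2 ^ a) :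
    Odd (Nat.card {q : Finset (Fin (2 ^ a)) × Finset (Fin l) // 2 ^ q.1.card + q.2.card ≤ l}) := by
  classical
  let f : ℕ → ℕ := fun i => (Finset.univ.filter fun N : Finset (Fin l) => 2 ^ i + N.card ≤ l).card
  have h1 : Nat.card {q : Finset (Fin (2 ^ a)) × Finset (Fin l) // 2 ^ q.1.card + q.2.card ≤ l} =
      ∑ i ∈ Finset.range (2 ^ a + 1), (2 ^ a).choose i • f i := by
    have := Finset.sum_powerset_apply_card (x := (Finset.univ : Finset (Fin (2 ^ a)))) f
    rw [Finset.card_univ, Fintype.card_fin, Finset.powerset_univ] at this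
    rw [← this, Nat.card_eq_fintype_card, Fintype.card_subtype]
    simp only [f, Finset.card_filter]
    rw [← Finset.sum_product', Finset.univ_product_univ]
  have hf0 : f 0 = 2 ^ l - 1 := by
    have : (Finset.univ.filter fun N : Finset (Fin l) => 2 ^ 0 + N.card ≤ l) =
        Finset.univ.erase Finset.univ := by
      ext N
      have h2 := Finset.card_le_univ N
      have h3 := Finset.card_eq_iff_eq_univ N
      rw [Fintype.card_fin] at h2 h3
      simp only [Finset.mem_filter_univ, Finset.mem_erase, Finset.mem_univ, and_true, pow_zero,
        ← h3, ne_eq]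
      omega
    simp only [f, this]
    rw [Finset.card_erase_of_mem (Finset.mem_univ _)]
    simp
  have hfa : f (2 ^ a) = 0 := by
    simp only [f, Finset.card_eq_zero, Finset.filter_eq_empty_iff]
    intro N _
    omega
  rw [h1, Finset.sum_range_succ, hfa, smul_zero, add_zero, Finset.sum_range_eq_add_Ico _ (by positivity),
    hf0, Nat.choose_zero_right, one_smul]
  refine Odd.add_even ?_ (Finset.even_sum _ fun i hi => ?_)
  · exact Nat.Even.sub_odd Nat.one_le_two_pow ((Nat.even_pow.2 ⟨even_two, hl.ne'⟩)) odd_one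
  · rw [Finset.mem_Ico] at hi
    rw [smul_eq_mul]
    refine Even.mul_right (even_iff_two_dvd.2 (Nat.prime_two.dvd_choose_pow (by omega) (by omega))) _

/-- The number of graphs on the disjoint union of `2 ^ 2 ^ a` vertices and an `l`-clique to which
an `(l + 1)`-chromatic graph has no homomorphism is odd. -/
theorem odd_card_no_hom {V : Type} (H : SimpleGraph V) (a l : ℕ) (hl : 0 < l)
    (hal : l < 2 ^ 2 ^ a) (hcol : ∀ m, H.Colorable m ↔ l < m) :
    Odd (Nat.card {R : SimpleGraph ((Fin (2 ^ a) → Bool) ⊕ Fin l) //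
      (∀ p p' : Fin l, p ≠ p' → R.Adj (Sum.inr p) (Sum.inr p')) ∧ IsEmpty (H →g R)}) := by
  let S := {R : SimpleGraph ((Fin (2 ^ a) → Bool) ⊕ Fin l) //
      (∀ p p' : Fin l, p ≠ p' → R.Adj (Sum.inr p) (Sum.inr p')) ∧ IsEmpty (H →g R)}
  let act : MulAction (treeAut (2 ^ a)) S :=
    { smul := fun τ R => ⟨R.1.comap (Sum.map (τ⁻¹ : treeAut (2 ^ a)).1 id),
        fun p p' h => R.2.1 p p' h, ⟨fun φ => R.2.2.false
          ⟨fun v => Sum.map (τ⁻¹ : treeAut (2 ^ a)).1 id (φ v), fun {v w} h => φ.map_rel h⟩⟩⟩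
      one_smul := fun R => Subtype.ext <| by
        ext (x | p) (y | p') <;> exact Iff.rfl
      mul_smul := fun τ σ R => Subtype.ext <| by
        change R.1.comap _ = (R.1.comap _).comap _
        rw [mul_inv_rev]
        ext (x | p) (y | p') <;> exact Iff.rfl }
  have hact : ∀ (τ : treeAut (2 ^ a)) (R : S) q q', (τ • R).1.Adj q q' ↔
      R.1.Adj (Sum.map (τ⁻¹ : treeAut (2 ^ a)).1 id q) (Sum.map (τ⁻¹ : treeAut (2 ^ a)).1 id q') :=
    fun _ _ _ _ => Iff.rfl
  have hmod : Nat.card S ≡ Nat.card (MulAction.fixedPoints (treeAut (2 ^ a)) S) [MOD 2] :=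
    isPGroup_treeAut.card_modEq_card_fixedPoints S
  rw [Nat.odd_iff, hmod, ← Nat.odd_iff]
  convert odd_card_level_data a l hl hal using 1
  have hcol' : ∀ m, H.Colorable m ↔ Fintype.card (Fin l) < m := by simpa using hcol
  have hmem : ∀ (A : Finset (Fin (2 ^ a))) (N : Finset (Fin l)),
      2 ^ A.card + N.card ≤ l ↔ IsEmpty (H →g levelGraph A N) := by
    intro A N
    rw [isEmpty_hom_levelGraph_iff H hcol', Fintype.card_fin]
  refine Nat.card_congr (Equiv.symm (Equiv.ofBijective
    (fun q => ⟨⟨levelGraph q.1.1 q.1.2, fun p p' h => h, (hmem _ _).1 q.2⟩, fun τ => ?_⟩) ⟨?_, ?_⟩))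
  · refine Subtype.ext ?_
    have hτ := mem_treeAut.1 (τ⁻¹ : treeAut (2 ^ a)).2
    ext (x | p) (y | p')
    · exact exists_congr fun i => and_congr_right fun _ =>
        and_congr (hτ _ _ _) (not_congr (hτ _ _ _))
    all_goals exact Iff.rfl
  · rintro ⟨q, hq⟩ ⟨q', hq'⟩ h
    exact Subtype.ext (levelGraph_injective (congrArg (fun z => z.1.1) h))
  · rintro ⟨R, hR⟩
    classical
    have hfix : ∀ τ ∈ treeAut (2 ^ a), ∀ q q', R.1.Adj (Sum.map τ id q) (Sum.map τ id q') ↔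
        R.1.Adj q q' := by
      intro τ hτ q q'
      have h1 := hact (⟨τ, hτ⟩⁻¹) R q q'
      rw [hR, inv_inv] at h1
      exact h1.symm
    let A : Finset (Fin (2 ^ a)) := {i | ∃ x y, FirstDiff i x y ∧ R.1.Adj (.inl x) (.inl y)}
    let N : Finset (Fin l) := {p | ∃ x, R.1.Adj (.inl x) (.inr p)}
    have hN : ∀ x p, R.1.Adj (.inl x) (.inr p) ↔ p ∈ N := by
      intro x p
      simp only [N, Finset.mem_filter_univ]
      refine ⟨fun h => ⟨x, h⟩, ?_⟩
      rintro ⟨x', h⟩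
      obtain ⟨τ, hτ, rfl⟩ := exists_treeAut_apply_eq x' x
      exact (hfix τ hτ (.inl x') (.inr p)).2 h
    have hRA : levelGraph A N = R.1 := by
      ext (x | p) (y | p')
      · constructor
        · rintro ⟨i, hi, h⟩
          simp only [A, Finset.mem_filter_univ] at hi
          obtain ⟨x', y', h', hadj⟩ := hi
          obtain ⟨τ, hτ, rfl, rfl⟩ := exists_treeAut_of_firstDiff h' h
          exact (hfix τ hτ (.inl x') (.inl y')).2 hadj
        · intro h
          obtain ⟨i, hi⟩ := exists_firstDiff (fun h' : x = y => h.ne (congrArg Sum.inl h'))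
          exact ⟨i, (Finset.mem_filter_univ _).2 ⟨x, y, hi, h⟩, hi⟩
      · exact (hN x p').symm
      · rw [R.1.adj_comm]
        exact (hN y p).symm
      · exact ⟨R.2.1 p p', fun h h' => h.ne (congrArg Sum.inr h')⟩
    refine ⟨⟨(A, N), (hmem A N).2 ?_⟩, Subtype.ext (Subtype.ext hRA)⟩
    rw [hRA]
    exact R.2.2

end OddCount

section BlockSpace

variable {B L : Type}

/-- Vertices arranged in blocks, each carrying a field structure, and in cyclic parts. -/
abbrev BlockSpace (F : B → Type) (w : L → ℕ) : Type := (Σ b, F b) ⊕ (Σ p, ZMod (w p))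

namespace BlockSpace

/-- The block or part of a vertex. -/
def label (F : B → Type) (w : L → ℕ) : BlockSpace F w → B ⊕ L := Sum.map Sigma.fst Sigma.fst

variable (F : B → Type) [∀ b, Field (F b)] (w : L → ℕ)

/-- Independent translations of the blocks; the parts are fixed pointwise. -/
@[reducible]
def translation : MulAction (Multiplicative (∀ b, F b)) (BlockSpace F w) where
  smul g := Sum.map (Sigma.map id fun b x => g.toAdd b + x) id
  one_smul u := by
    rcases u with ⟨b, x⟩ | u
    · exact congrArg (fun y => Sum.inl (Sigma.mk b y)) (zero_add x)
    · rfl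
  mul_smul g h u := by
    rcases u with ⟨b, x⟩ | u
    · exact congrArg (fun y => Sum.inl (Sigma.mk b y)) (add_assoc (g.toAdd b) (h.toAdd b) x)
    · rfl

variable {F}

/-- Multiplication by a unit on every block together with a rotation of every part. -/
def dilation (ζ : ∀ b, (F b)ˣ) : Equiv.Perm (BlockSpace F w) :=
  Equiv.sumCongr (Equiv.sigmaCongrRight fun b => (ζ b).mulLeft)
    (Equiv.sigmaCongrRight fun p => Equiv.addRight (1 : ZMod (w p)))

lemma dilation_pow_inl (ζ : ∀ b, (F b)ˣ) (k : ℕ) (b : B) (x : F b) :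
    (dilation w ζ ^ k) (.inl ⟨b, x⟩) = .inl ⟨b, ((ζ b ^ k : (F b)ˣ) : F b) * x⟩ := by
  induction k with
  | zero => simp
  | succ k ih =>
    rw [pow_succ', Equiv.Perm.mul_apply, ih, pow_succ', Units.val_mul, mul_assoc]
    rfl

lemma dilation_pow_inr (ζ : ∀ b, (F b)ˣ) (k : ℕ) (p : L) (z : ZMod (w p)) :
    (dilation w ζ ^ k) (.inr ⟨p, z⟩) = .inr ⟨p, z + k⟩ := by
  induction k with
  | zero => simp
  | succ k ih =>
    rw [pow_succ', Equiv.Perm.mul_apply, ih, Nat.cast_succ, ← add_assoc]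
    rfl

variable {w}

/-- Translations and a dilation by generators of the unit groups act transitively on the pairs of
distinct vertices with prescribed labels, as soon as one of the labels is a block. -/
lemma rel_of_rel [∀ p, NeZero (w p)] (ζ : ∀ b, (F b)ˣ)
    (hζ : ∀ b (y : (F b)ˣ), ∃ k : ℕ, ζ b ^ k = y)
    (r : BlockSpace F w → BlockSpace F w → Prop)
    (htrans : ∀ (g : ∀ b, F b) u v, r u v →
      r ((translation F w).smul (.ofAdd g) u) ((translation F w).smul (.ofAdd g) v))
    (hdil : ∀ u v, r u v → r (dilation w ζ u) (dilation w ζ v))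
    {u v u' v' : BlockSpace F w} (huv : u ≠ v) (huv' : u' ≠ v')
    (hu : label F w u = label F w u') (hv : label F w v = label F w v')
    (hleft : (label F w u).isLeft) (h : r u v) : r u' v' := by
  classical
  have hpow : ∀ (k : ℕ) u v, r u v → r ((dilation w ζ ^ k) u) ((dilation w ζ ^ k) v) := by
    intro k
    induction k with
    | zero => exact fun u v h => h
    | succ k ih =>
      intro u v h
      rw [pow_succ', Equiv.Perm.mul_apply, Equiv.Perm.mul_apply]
      exact hdil _ _ (ih _ _ h)
  rcases u with ⟨b, x⟩ | ⟨p, z⟩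
  swap
  · simp [label] at hleft
  rcases u' with ⟨b', x'⟩ | ⟨p', z'⟩
  swap
  · simp [label] at hu
  obtain rfl : b = b' := by simpa [label] using hu
  have hsmul : ∀ (g : ∀ b, F b) b (x : F b), (translation F w).smul (.ofAdd g) (.inl ⟨b, x⟩) =
    .inl ⟨b, g b + x⟩ := fun _ _ _ => rfl
  have hsmul' : ∀ (g : ∀ b, F b) z, (translation F w).smul (.ofAdd g) (.inr z) =
    .inr z := fun _ _ => rfl
  rcases v with ⟨c, y⟩ | ⟨p, z⟩
  · rcases v' with ⟨c', y'⟩ | ⟨p', z'⟩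
    swap
    · simp [label] at hv
    obtain rfl : c = c' := by simpa [label] using hv
    by_cases hbc : b = c
    · subst hbc
      have hxy : y - x ≠ 0 := fun h' => huv (by rw [sub_eq_zero.1 h'])
      have hxy' : y' - x' ≠ 0 := fun h' => huv' (by rw [sub_eq_zero.1 h'])
      obtain ⟨k, hk⟩ := hζ b (Units.mk0 _ hxy' / Units.mk0 _ hxy)
      have h1 := hpow k _ _ h
      rw [dilation_pow_inl, dilation_pow_inl, hk] at h1
      have h2 := htrans (Function.update 0 b
        (x' - ((Units.mk0 _ hxy' / Units.mk0 _ hxy : (F b)ˣ) : F b) * x)) _ _ h1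
      rw [hsmul, hsmul, Function.update_self] at h2
      convert h2 using 3
      · ring
      · rw [Units.val_div_eq_div_val, Units.val_mk0, Units.val_mk0]
        field_simp
        ring
    · have h2 := htrans (Function.update (Function.update 0 c (y' - y)) b (x' - x)) _ _ h
      rw [hsmul, hsmul, Function.update_self, Function.update_of_ne (Ne.symm hbc),
        Function.update_self, sub_add_cancel, sub_add_cancel] at h2
      exact h2
  · rcases v' with ⟨c', y'⟩ | ⟨p', z'⟩
    · simp [label] at hv
    obtain rfl : p = p' := by simpa [label] using hv
    have h1 := hpow (z' - z).val _ _ h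
    rw [dilation_pow_inl, dilation_pow_inr, ZMod.natCast_zmod_val, add_sub_cancel] at h1
    have h2 := htrans (Function.update 0 b
      (x' - ((ζ b ^ (z' - z).val : (F b)ˣ) : F b) * x)) _ _ h1
    rw [hsmul, hsmul', Function.update_self, sub_add_cancel] at h2
    exact h2

end BlockSpace

theorem even_card_quotient_graphs_blockSpace {V ι : Type} [Finite B] [Finite L] [Finite ι]
    [Fintype V] [Nonempty V] (H : SimpleGraph V) (F : B → Type) [∀ b, Field (F b)]
    [∀ b, Finite (F b)] (w : L → ℕ) [∀ p, NeZero (w p)] (s : B → ℕ)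
    (hF : ∀ b, Nat.card (F b) = 2 ^ s b) (hVF : ∀ b, Fintype.card V ≤ 2 ^ s b)
    (hVw : ∀ p, Fintype.card V ≤ w p)
    (j : LivePair (BlockSpace.label F w) ↪ ι) (ρ : ι → Bool) (T : DecisionTree ι)
    (hT : T.depth < Fintype.card (LivePair (BlockSpace.label F w)))
    (hTH : ∀ x, (∀ i ∉ Set.range j, x i = ρ i) → (T.eval x = true ↔
      ¬ContainsCopy H (LivePair.graph
        ({a | x (j a) = true} : Finset (LivePair (BlockSpace.label F w)))))) :
    Even (Nat.card {R : SimpleGraph (B ⊕ L) //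
      (∀ p p' : L, p ≠ p' → R.Adj (Sum.inr p) (Sum.inr p')) ∧ IsEmpty (H →g R)}) := by
  classical
  have := Fintype.ofFinite B
  let _ := BlockSpace.translation F w
  have hζ : ∀ b, ∃ ζ : (F b)ˣ, ∀ y : (F b)ˣ, ∃ k : ℕ, ζ ^ k = y := by
    intro b
    obtain ⟨ζ, hζ⟩ := IsCyclic.exists_generator (α := (F b)ˣ)
    exact ⟨ζ, fun y => mem_powers_iff_mem_zpowers.2 (hζ y)⟩
  choose ζ hζ using hζ
  refine even_card_quotient_graphs (P := Multiplicative (∀ b, F b)) (k := ∑ b, s b) H ?_ ?_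
    (BlockSpace.dilation w ζ) ?_ ?_ ?_ ?_ j ρ T hT hTH
  · rw [Nat.card_congr Multiplicative.toAdd, Nat.card_pi, Finset.prod_congr rfl fun b _ => hF b,
      Finset.prod_pow_eq_pow_sum]
  · rintro g (u | u) <;> rfl
  · rintro (u | u) <;> rfl
  · intro g
    refine ⟨.ofAdd fun b => ζ b * g.toAdd b, ?_⟩
    rintro (⟨b, x⟩ | u)
    · exact congrArg (fun y => Sum.inl (Sigma.mk b y)) (mul_add (ζ b : F b) (g.toAdd b) x)
    · rfl
  · rintro (b | p)
    · have := Fintype.ofFinite (F b)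
      obtain ⟨e⟩ : Nonempty (V ↪ F b) := Function.Embedding.nonempty_of_card_le (by
        rw [← Nat.card_eq_fintype_card (α := F b), hF]; exact hVF b)
      exact ⟨fun v => .inl ⟨b, e v⟩, fun v v' h => e.injective (by simpa using h), fun v => rfl⟩
    · obtain ⟨e⟩ : Nonempty (V ↪ ZMod (w p)) := Function.Embedding.nonempty_of_card_le (by
        rw [ZMod.card]; exact hVw p)
      exact ⟨fun v => .inr ⟨p, e v⟩, fun v v' h => e.injective (by simpa using h), fun v => rfl⟩
  · intro r _ htrans hdil u v u' v' huv huv' hu hv hleft h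
    exact BlockSpace.rel_of_rel ζ hζ r (fun g => htrans (.ofAdd g)) hdil huv huv' hu hv hleft h

end BlockSpace

section Transfer

variable {U B L : Type}

instance (n : ℕ) : Finite (EdgeVar n) :=
  inferInstanceAs (Finite {p : Fin n × Fin n // p.1 < p.2})

lemma graphOfInput_adj_iff {n : ℕ} (x : EdgeVar n → Bool) (p : EdgeVar n) :
    (graphOfInput x).Adj p.1.1 p.1.2 ↔ x p = true := by
  rw [graphOfInput, SimpleGraph.fromRel_adj]
  constructor
  · rintro ⟨-, ⟨h, hx⟩ | ⟨h, hx⟩⟩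
    · exact hx
    · exact absurd h p.2.not_gt
  · exact fun h => ⟨p.2.ne, Or.inl ⟨p.2, h⟩⟩

lemma LivePair.exists_embedding_edgeVar (κ : U → B ⊕ L) {n : ℕ} (e : U ≃ Fin n) :
    ∃ j : LivePair κ ↪ EdgeVar n, ∀ a, a.1 = s(e.symm (j a).1.1, e.symm (j a).1.2) := by
  have h : ∀ a : LivePair κ, ∃ p : EdgeVar n, a.1 = s(e.symm p.1.1, e.symm p.1.2) := by
    intro a
    obtain ⟨⟨u, v⟩, ha⟩ := Quot.exists_rep a.1
    have hne : e u ≠ e v := fun h => a.2.1 (by rw [← ha, e.injective h]; exact rfl)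
    rcases hne.lt_or_gt with h | h
    · exact ⟨⟨(e u, e v), h⟩, by simpa using ha.symm⟩
    · exact ⟨⟨(e v, e u), h⟩, by rw [Sym2.eq_swap]; simpa using ha.symm⟩
  choose j hj using h
  exact ⟨⟨j, fun a a' h => Subtype.ext (by rw [hj, hj, h])⟩, hj⟩

/-- Fixing the pairs inside the fibres over `L` as a complete multipartite graph. -/
lemma LivePair.graphOfInput_adj_iff_graph_adj [Finite U] {κ : U → B ⊕ L} {n : ℕ} (e : U ≃ Fin n)
    (j : LivePair κ ↪ EdgeVar n) (hj : ∀ a, a.1 = s(e.symm (j a).1.1, e.symm (j a).1.2))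
    (x : EdgeVar n → Bool)
    (hx : ∀ p ∉ Set.range j, (x p = true ↔ κ (e.symm p.1.1) ≠ κ (e.symm p.1.2))) (u v : U) :
    (graphOfInput x).Adj (e u) (e v) ↔
      (graph ({a | x (j a) = true} : Finset (LivePair κ))).Adj u v := by
  have key : ∀ p : EdgeVar n, (graphOfInput x).Adj p.1.1 p.1.2 ↔
      (graph ({a | x (j a) = true} : Finset (LivePair κ))).Adj (e.symm p.1.1) (e.symm p.1.2) := by
    intro p
    rw [graphOfInput_adj_iff]
    by_cases hp : p ∈ Set.range j
    · obtain ⟨a, rfl⟩ := hp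
      rw [← mem_iff_graph_adj (hj a), Finset.mem_filter_univ]
    · rw [hx p hp, graph_adj]
      have hinj : ∀ a : LivePair κ, a.1 ≠ s(e.symm p.1.1, e.symm p.1.2) := by
        intro a ha
        refine hp ⟨a, ?_⟩
        rw [hj a, Sym2.eq_iff] at ha
        simp only [EmbeddingLike.apply_eq_iff_eq] at ha
        rcases ha with ⟨h1, h2⟩ | ⟨h1, h2⟩
        · exact Subtype.ext (Prod.ext h1 h2)
        · exact absurd (h1 ▸ h2 ▸ (j a).2) p.2.not_gt
      have hne : e.symm p.1.1 ≠ e.symm p.1.2 := e.symm.injective.ne p.2.ne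
      have hright : ∀ v ∈ s(e.symm p.1.1, e.symm p.1.2), ∃ c, κ v = Sum.inr c := by
        intro v hv
        by_contra hc
        refine hinj ⟨s(e.symm p.1.1, e.symm p.1.2), hne, v, hv, ?_⟩ rfl
        rcases h : κ v with b | c
        · rfl
        · exact absurd ⟨c, h⟩ hc
      obtain ⟨c, hc⟩ := hright _ (Sym2.mem_mk_left _ _)
      obtain ⟨c', hc'⟩ := hright _ (Sym2.mem_mk_right _ _)
      simp only [hinj, and_false, exists_false, false_or, hc, hc', Sum.inr.injEq, ne_eq]
      simp
  rcases lt_trichotomy (e u) (e v) with h | h | h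
  · simpa using key ⟨(e u, e v), h⟩
  · obtain rfl := e.injective h
    simp
  · rw [SimpleGraph.adj_comm, SimpleGraph.adj_comm _ u]
    simpa using key ⟨(e v, e u), h⟩

lemma LivePair.choose_two_le_card [Fintype U] (κ : U → B ⊕ L) :
    (Fintype.card U).choose 2 ≤
      Fintype.card (LivePair κ) + Nat.card {u // (κ u).isRight} ^ 2 := by
  classical
  rw [← Sym2.card_subtype_not_diag, Fintype.card_subtype, Nat.card_eq_fintype_card, sq,
    ← Fintype.card_prod]
  let W := {u // (κ u).isRight}
  refine le_trans (Finset.card_le_card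
    (t := ((Finset.univ : Finset (LivePair κ)).image fun a => (a.1 : Sym2 U)) ∪
      (Finset.univ : Finset (W × W)).image fun q => s(q.1.1, q.2.1)) ?_)
    ((Finset.card_union_le _ _).trans (add_le_add Finset.card_image_le Finset.card_image_le))
  intro a ha
  rw [Finset.mem_filter_univ] at ha
  rw [Finset.mem_union, Finset.mem_image, Finset.mem_image]
  by_cases h : ∃ v ∈ a, (κ v).isLeft
  · exact Or.inl ⟨⟨a, ha, h⟩, Finset.mem_univ _, rfl⟩
  · obtain ⟨⟨u, v⟩, rfl⟩ := Quot.exists_rep a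
    have h' : ∀ z ∈ s(u, v), (κ z).isRight := fun z hz =>
      Sum.not_isLeft.1 fun hl => h ⟨z, hz, hl⟩
    exact Or.inr ⟨(⟨u, h' _ (Sym2.mem_mk_left _ _)⟩, ⟨v, h' _ (Sym2.mem_mk_right _ _)⟩),
      Finset.mem_univ _, rfl⟩

end Transfer

section Numerics

lemma exists_sum_two_pow_eq (b : ℕ) : ∀ x < 2 ^ b, ∃ s : Fin (b + 1) → ℕ,
    ∑ i, 2 ^ s i = b + 1 + x := by
  induction b with
  | zero => exact fun x hx => ⟨0, by simp at hx; simp [hx]⟩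
  | succ b ih =>
    intro x hx
    let t := Nat.log 2 (x + 1)
    have h1 : 2 ^ t ≤ x + 1 := Nat.pow_log_le_self 2 (by omega)
    have h2 : x + 1 < 2 ^ (t + 1) := Nat.lt_pow_succ_log_self (by omega) _
    have h3 : x + 1 - 2 ^ t < 2 ^ b := by
      rw [pow_succ] at hx h2
      rcases Nat.lt_or_ge b t with h | h
      · have := Nat.pow_le_pow_right two_pos h
        rw [Nat.succ_eq_add_one, pow_succ] at this
        have := Nat.two_pow_pos b
        omega
      · have := Nat.pow_le_pow_right two_pos h
        omega
    obtain ⟨s, hs⟩ := ih _ h3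
    refine ⟨Fin.cons t s, ?_⟩
    rw [Fin.sum_univ_succ]
    simp only [Fin.cons_zero, Fin.cons_succ, hs]
    omega

lemma sq_le_two_pow_pred (b : ℕ) (hb : 7 ≤ b) : b ^ 2 ≤ 2 ^ (b - 1) := by
  induction b, hb using Nat.le_induction with
  | base => norm_num
  | succ b hb ih =>
    obtain ⟨c, rfl⟩ : ∃ c, b = c + 1 := ⟨b - 1, by omega⟩
    simp only [Nat.add_sub_cancel] at ih ⊢
    rw [pow_succ 2 c]
    nlinarith

lemma exists_two_pow_two_pow_sum (l M : ℕ) (hM : (l + 1) ^ 2 + 49 ≤ M) : ∃ a, l < 2 ^ 2 ^ a ∧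
    ∃ s : (Fin (2 ^ a) → Bool) → ℕ, ∑ i, 2 ^ s i = M := by
  let a := Nat.log 2 (Nat.log 2 M)
  have hlog : Nat.log 2 M ≠ 0 := (Nat.log_pos one_lt_two (by omega)).ne'
  have h1 : 2 ^ 2 ^ a ≤ M := (Nat.pow_le_pow_right two_pos (Nat.pow_log_le_self 2 hlog)).trans
    (Nat.pow_log_le_self 2 (by omega))
  have h2 : M < (2 ^ 2 ^ a) ^ 2 := by
    rw [← pow_mul, ← pow_succ]
    exact (Nat.lt_pow_succ_log_self one_lt_two M).trans_le
      (Nat.pow_le_pow_right two_pos (Nat.lt_pow_succ_log_self one_lt_two _))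
  have hcard : Fintype.card (Fin (2 ^ a) → Bool) = 2 ^ 2 ^ a := by simp
  generalize 2 ^ 2 ^ a = b at h1 h2 hcard
  have h3 : l < b := by nlinarith
  have h4 : 7 ≤ b := by nlinarith
  have h5 := sq_le_two_pow_pred b h4
  obtain ⟨c, rfl⟩ : ∃ c, b = c + 1 := ⟨b - 1, by omega⟩
  rw [Nat.add_sub_cancel] at h5
  obtain ⟨s, hs⟩ := exists_sum_two_pow_eq c (M - (c + 1)) (by omega)
  refine ⟨a, ?_, s ∘ Fintype.equivFinOfCardEq hcard, ?_⟩
  · rw [Fintype.card_pi] at hcard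
    simp at hcard
    omega
  · rw [← (Fintype.equivFinOfCardEq hcard).sum_comp] at hs
    simp only [Function.comp_apply, hs]
    omega

end Numerics

lemma SimpleGraph.exists_colorable_iff_lt {V : Type} [Fintype V] (H : SimpleGraph V)
    (hH : H.edgeSet.Nonempty) : ∃ l, 0 < l ∧ ∀ m, H.Colorable m ↔ l < m := by
  classical
  have hex : ∃ m, H.Colorable m := ⟨_, H.colorable_of_fintype⟩
  obtain ⟨⟨u, v⟩, huv⟩ := hH
  have huv : H.Adj u v := huv
  have h2 : 2 ≤ Nat.find hex := by
    rw [Nat.le_find_iff]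
    rintro m hm ⟨c⟩
    refine c.valid huv (Fin.ext ?_)
    omega
  refine ⟨Nat.find hex - 1, by omega, fun m => ⟨fun h => ?_, fun h => ?_⟩⟩
  · have := Nat.find_min' hex h
    omega
  · exact (Nat.find_spec hex).mono (by omega)

theorem depth_ge_of_blockSpace {V : Type} [Fintype V] [Nonempty V] (H : SimpleGraph V) {a l n : ℕ}
    (hl : 0 < l) (hal : l < 2 ^ 2 ^ a) (hcol : ∀ m, H.Colorable m ↔ l < m)
    (s : (Fin (2 ^ a) → Bool) → ℕ) (w : Fin l → ℕ) (hs : ∀ b, Fintype.card V ≤ 2 ^ s b)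
    (hs0 : ∀ b, s b ≠ 0) (hw : ∀ p, Fintype.card V ≤ w p)
    (hn : ∑ b, 2 ^ s b + ∑ p, w p = n) (T : DecisionTree (EdgeVar n))
    (hT : ∀ x, T.eval x = true ↔ graphOfInput x ∈ ForbiddenSubgraphProperty H n) :
    n.choose 2 ≤ T.depth + (∑ p, w p) ^ 2 := by
  classical
  have : Fact (Nat.Prime 2) := ⟨Nat.prime_two⟩
  have : ∀ p, NeZero (w p) := fun p => ⟨(Fintype.card_pos.trans_le (hw p)).ne'⟩
  let F : (Fin (2 ^ a) → Bool) → Type := fun b => GaloisField 2 (s b)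
  have hF : ∀ b, Nat.card (F b) = 2 ^ s b := fun b => GaloisField.card 2 _ (hs0 b)
  let _ : ∀ b, Fintype (F b) := fun b => Fintype.ofFinite _
  have hcardF : ∀ b, Fintype.card (F b) = 2 ^ s b := fun b => by
    rw [← Nat.card_eq_fintype_card, hF]
  have hU : Fintype.card (BlockSpace F w) = n := by
    rw [Fintype.card_sum, Fintype.card_sigma, Fintype.card_sigma, ← hn]
    simp only [hcardF, ZMod.card]
  let κ := BlockSpace.label F w
  have hW : Nat.card {u // (κ u).isRight} = ∑ p, w p := by
    have : ∑ p, w p = Nat.card (Σ p, ZMod (w p)) := by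
      rw [Nat.card_eq_fintype_card, Fintype.card_sigma]
      simp only [ZMod.card]
    rw [this]
    refine Nat.card_congr (Equiv.ofBijective (fun z => ⟨.inr z, rfl⟩) ⟨?_, ?_⟩).symm
    · exact fun z z' h => Sum.inr.inj (congrArg Subtype.val h)
    · rintro ⟨u | z, h⟩
      · simp [κ, BlockSpace.label] at h
      · exact ⟨z, rfl⟩
  by_contra! hlt
  have hcard := LivePair.choose_two_le_card κ
  rw [hU, hW] at hcard
  have e : BlockSpace F w ≃ Fin n := Fintype.equivFinOfCardEq hU
  obtain ⟨j, hj⟩ := LivePair.exists_embedding_edgeVar κ e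
  have heven := even_card_quotient_graphs_blockSpace H F w s hF hs hw j
    (fun p => decide (κ (e.symm p.1.1) ≠ κ (e.symm p.1.2))) T
    (by change _ < Fintype.card (LivePair κ); omega) (by
      intro x hx
      have hadj := LivePair.graphOfInput_adj_iff_graph_adj e j hj x fun p hp => by
        rw [hx p hp, decide_eq_true_iff]
      rw [hT]
      refine not_congr ⟨?_, ?_⟩
      · refine ContainsCopy.of_injective e.symm.injective fun u v h => ?_
        rw [← hadj]
        simpa using h
      · exact ContainsCopy.of_injective e.injective fun u v h => (hadj u v).2 h)
  exact Nat.not_even_iff_odd.2 (odd_card_no_hom H a l hl hal hcol) heven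

/-- For every finite graph `H` with at least one edge there is a constant `C_H` such
that the query complexity of `Q_n^H` is at least `n(n-1)/2 - C_H` for all `n`. -/
theorem forbidden_subgraph_query_complexity_lower_bound
    {V : Type} [Fintype V] (H : SimpleGraph V) (hH : H.edgeSet.Nonempty) :
    ∃ C : ℕ, ∀ n : ℕ, n * (n - 1) / 2 - C ≤ queryComplexity (ForbiddenSubgraphProperty H n) := by
  classical
  obtain ⟨l, hl, hcol⟩ := H.exists_colorable_iff_lt hH
  have : Nonempty V := by
    obtain ⟨⟨u, v⟩, -⟩ := hH
    exact ⟨u⟩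
  have hV : Fintype.card V ≠ 0 := Fintype.card_ne_zero
  let q := 2 ^ Fintype.card V
  have hq : Fintype.card V ≤ q := Nat.lt_two_pow_self.le
  have hq0 : 0 < q := Nat.two_pow_pos _
  let n₀ := ((l + 1) ^ 2 + 49 + l) * q
  refine ⟨n₀ * n₀ + ((l + 1) * q) ^ 2, fun n => ?_⟩
  rcases Nat.lt_or_ge n n₀ with hn | hn
  · have : n * (n - 1) / 2 ≤ n₀ * n₀ :=
      (Nat.div_le_self _ _).trans (Nat.mul_le_mul hn.le ((Nat.sub_le _ _).trans hn.le))
    omega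
  have hne : {d | ∃ T : DecisionTree (EdgeVar n), (∀ x, T.eval x = true ↔
      graphOfInput x ∈ ForbiddenSubgraphProperty H n) ∧ T.depth ≤ d}.Nonempty := by
    have := Fintype.ofFinite (EdgeVar n)
    obtain ⟨T, hT⟩ := DecisionTree.exists_eval_eq (Finset.univ : Finset (EdgeVar n))
      (fun x => decide (graphOfInput x ∈ ForbiddenSubgraphProperty H n))
      fun x y h => by rw [funext fun i => h i (Finset.mem_univ i)]
    exact ⟨T.depth, T, fun x => by rw [hT, decide_eq_true_iff], le_rfl⟩
  obtain ⟨T, hT, hdepth⟩ := Nat.sInf_mem hne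
  have hdiv : (l + 1) ^ 2 + 49 + l ≤ n / q := (Nat.le_div_iff_mul_le hq0).2 hn
  obtain ⟨a, hal, s, hs⟩ := exists_two_pow_two_pow_sum l (n / q - l) (by omega)
  let w : Fin l → ℕ := fun p => q + if p = ⟨0, hl⟩ then n % q else 0
  have hw : ∑ p, w p = l * q + n % q := by
    simp [w, Finset.sum_add_distrib]
  have hsum : ∑ b, 2 ^ (Fintype.card V + s b) + ∑ p, w p = n := by
    simp only [pow_add, ← Finset.mul_sum, hs, hw]
    change q * _ + _ = n
    rw [Nat.mul_sub, mul_comm l q]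
    have h1 := Nat.mul_le_mul_left q (show l ≤ n / q by omega)
    have h2 := Nat.div_add_mod n q
    omega
  have hmain := depth_ge_of_blockSpace H hl hal hcol (fun b => Fintype.card V + s b) w
    (fun b => hq.trans (Nat.pow_le_pow_right two_pos (Nat.le_add_right _ _))) (fun b => by omega)
    (fun p => hq.trans (Nat.le_add_right _ _)) hsum T hT
  have hwle : (∑ p, w p) ^ 2 ≤ ((l + 1) * q) ^ 2 := by
    refine Nat.pow_le_pow_left ?_ 2
    rw [hw, Nat.succ_mul]
    have := Nat.mod_lt n hq0
    omega
  rw [Nat.choose_two_right] at hmain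
  change _ ≤ sInf _
  omega
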